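/- arXiv:2008.10044 — 2 statements merged into one kernel-verified Lean document; each statement's English description precedes it below -/
import Mathlib

section
/- Let A be a Nakayama algebra and M an indecomposable module. Then pd M is finite and odd if and only if every composition factor of M has finite odd projective dimension; and in that case pd M equals the maximum of pd S over the composition factors S of M. -/
open CategoryTheory CategoryTheory.Limits

noncomputable section

namespace ArtinAlg

variable (A : Type) [Ring A]

/-- `M` admits a projective resolution of length at most `n`. -/
inductive ProjDimLE : ℕ → ModuleCat.{0} A → Prop
  | zero (M : ModuleCat.{0} A) (h : Projective M) : ProjDimLE 0 M
  | succ (n : ℕ) (M P : ModuleCat.{0} A) (f : P ⟶ M) (hP : Projective P) (hf : Epi f)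
      (h : ProjDimLE n (kernel f)) : ProjDimLE (n + 1) M

/-- `M` admits an injective coresolution of length at most `n`. -/
inductive InjDimLE : ℕ → ModuleCat.{0} A → Prop
  | zero (M : ModuleCat.{0} A) (h : Injective M) : InjDimLE 0 M
  | succ (n : ℕ) (M I : ModuleCat.{0} A) (f : M ⟶ I) (hI : Injective I) (hf : Mono f)
      (h : InjDimLE n (cokernel f)) : InjDimLE (n + 1) M

/-- The projective dimension `pd M ∈ ℕ∞`. -/
def projDim (M : ModuleCat.{0} A) : ℕ∞ :=
  sInf {d : ℕ∞ | ∃ n : ℕ, d = n ∧ ProjDimLE A n M}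

/-- The injective dimension `id M ∈ ℕ∞`. -/
def injDim (M : ModuleCat.{0} A) : ℕ∞ :=
  sInf {d : ℕ∞ | ∃ n : ℕ, d = n ∧ InjDimLE A n M}

/-- `f : P ⟶ M` is a projective cover: `P` is projective and `f` is an essential
(superfluous) epimorphism. -/
def IsProjectiveCoverHom {P M : ModuleCat.{0} A} (f : P ⟶ M) : Prop :=
  Projective P ∧ Epi f ∧ ∀ (N : ModuleCat.{0} A) (g : N ⟶ P), Epi (g ≫ f) → Epi g

/-- `P` is a projective cover of `M`. -/
def IsProjCoverOf (M P : ModuleCat.{0} A) : Prop :=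
  ∃ f : P ⟶ M, IsProjectiveCoverHom A f

/-- `f : M ⟶ I` is an injective envelope: `I` is injective and `f` is an essential
monomorphism. -/
def IsInjectiveEnvelopeHom {M I : ModuleCat.{0} A} (f : M ⟶ I) : Prop :=
  Injective I ∧ Mono f ∧ ∀ (N : ModuleCat.{0} A) (g : I ⟶ N), Mono (f ≫ g) → Mono g

/-- `I` is an injective envelope of `M`. -/
def IsInjEnvOf (M I : ModuleCat.{0} A) : Prop :=
  ∃ f : M ⟶ I, IsInjectiveEnvelopeHom A f

/-- `X ≅ Ω M`, the kernel of a projective cover of `M`. -/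
def IsSyzygyOf (M X : ModuleCat.{0} A) : Prop :=
  ∃ (P : ModuleCat.{0} A) (f : P ⟶ M), IsProjectiveCoverHom A f ∧ Nonempty (X ≅ kernel f)

/-- `X ≅ Σ M`, the cokernel of an injective envelope of `M`. -/
def IsCosyzygyOf (M X : ModuleCat.{0} A) : Prop :=
  ∃ (I : ModuleCat.{0} A) (f : M ⟶ I), IsInjectiveEnvelopeHom A f ∧ Nonempty (X ≅ cokernel f)

/-- `X ≅ Ω^n M`. -/
def IsNthSyzygy : ℕ → ModuleCat.{0} A → ModuleCat.{0} A → Prop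
  | 0, M, X => Nonempty (X ≅ M)
  | n + 1, M, X => ∃ Y, IsSyzygyOf A M Y ∧ IsNthSyzygy n Y X

/-- `X ≅ Σ^n M`. -/
def IsNthCosyzygy : ℕ → ModuleCat.{0} A → ModuleCat.{0} A → Prop
  | 0, M, X => Nonempty (X ≅ M)
  | n + 1, M, X => ∃ Y, IsCosyzygyOf A M Y ∧ IsNthCosyzygy n Y X

/-- `X` is a direct summand of `Y`. -/
def IsDirectSummandOf (X Y : ModuleCat.{0} A) : Prop :=
  ∃ (i : X ⟶ Y) (r : Y ⟶ X), i ≫ r = 𝟙 X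

/-- `X ∈ add W` : `X` is a direct summand of a finite direct sum of copies of `W`. -/
def InAdd (X W : ModuleCat.{0} A) : Prop :=
  ∃ n : ℕ, IsDirectSummandOf A X (ModuleCat.of A (Fin n → ↥W))

/-- The delooping level of `M` is at most `d` :
`Ω^d M ∈ add (A ⊕ Ω^{d+1} M')` for some finitely generated `M'`. -/
def DelLE (d : ℕ) (M : ModuleCat.{0} A) : Prop :=
  ∃ X, IsNthSyzygy A d M X ∧
    ∃ M' : ModuleCat.{0} A, Module.Finite A ↥M' ∧
      ∃ X', IsNthSyzygy A (d + 1) M' X' ∧ InAdd A X (ModuleCat.of A (A × ↥X'))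

/-- The delooping level `del M ∈ ℕ∞`. -/
def delLevel (M : ModuleCat.{0} A) : ℕ∞ :=
  sInf {d : ℕ∞ | ∃ n : ℕ, d = n ∧ DelLE A n M}

/-- The delooping level of the algebra: the supremum of `del S` over the simple modules. -/
def delAlg : ℕ∞ :=
  sSup {d : ℕ∞ | ∃ S : ModuleCat.{0} A, IsSimpleModule A ↥S ∧ delLevel A S = d}

/-- `Q` is a minimal injective cogenerator: the injective envelope of the direct sum of
a complete set of representatives of the simple modules. -/
def IsMinimalInjectiveCogenerator (Q : ModuleCat.{0} A) : Prop :=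
  ∃ (ι : Type) (_ : Fintype ι) (S : ι → ModuleCat.{0} A),
    (∀ i, IsSimpleModule A ↥(S i)) ∧
    (∀ T : ModuleCat.{0} A, IsSimpleModule A ↥T → ∃! i, Nonempty (↥T ≃ₗ[A] ↥(S i))) ∧
    IsInjEnvOf A (ModuleCat.of A (∀ i, ↥(S i))) Q

/-- The desuspending level of `M` is at most `d` :
`Σ^d M ∈ add (D(A) ⊕ Σ^{d+1} M')` for some finitely generated `M'`. -/
def DesLE (d : ℕ) (M : ModuleCat.{0} A) : Prop :=
  ∃ X, IsNthCosyzygy A d M X ∧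
    ∃ Q, IsMinimalInjectiveCogenerator A Q ∧
      ∃ M' : ModuleCat.{0} A, Module.Finite A ↥M' ∧
        ∃ X', IsNthCosyzygy A (d + 1) M' X' ∧ InAdd A X (ModuleCat.of A (↥Q × ↥X'))

/-- The desuspending level `des M ∈ ℕ∞`. -/
def desLevel (M : ModuleCat.{0} A) : ℕ∞ :=
  sInf {d : ℕ∞ | ∃ n : ℕ, d = n ∧ DesLE A n M}

/-- The desuspending level of the algebra. -/
def desAlg : ℕ∞ :=
  sSup {d : ℕ∞ | ∃ S : ModuleCat.{0} A, IsSimpleModule A ↥S ∧ desLevel A S = d}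

/-- The (small) finitistic projective dimension `fin-pro A`. -/
def finProDim : ℕ∞ :=
  sSup {d : ℕ∞ | ∃ M : ModuleCat.{0} A, Module.Finite A ↥M ∧ projDim A M = d ∧ d ≠ ⊤}

/-- The (small) finitistic injective dimension `fin-inj A`. -/
def finInjDim : ℕ∞ :=
  sSup {d : ℕ∞ | ∃ M : ModuleCat.{0} A, Module.Finite A ↥M ∧ injDim A M = d ∧ d ≠ ⊤}

/-- The big finitistic projective dimension `Fin-pro A`. -/
def bigFinProDim : ℕ∞ :=
  sSup {d : ℕ∞ | ∃ M : ModuleCat.{0} A, projDim A M = d ∧ d ≠ ⊤}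

/-- The big finitistic injective dimension `Fin-inj A`. -/
def bigFinInjDim : ℕ∞ :=
  sSup {d : ℕ∞ | ∃ M : ModuleCat.{0} A, injDim A M = d ∧ d ≠ ⊤}

/-- `M` is an indecomposable nonzero module. -/
def Indec (M : ModuleCat.{0} A) : Prop :=
  Nontrivial ↥M ∧ ∀ (N₁ N₂ : Submodule A ↥M), IsCompl N₁ N₂ → N₁ = ⊥ ∨ N₂ = ⊥

/-- `M` is serial (uniserial): its submodules form a chain. -/
def IsUniserial (M : ModuleCat.{0} A) : Prop :=
  ∀ N₁ N₂ : Submodule A ↥M, N₁ ≤ N₂ ∨ N₂ ≤ N₁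

/-- `A` is a Nakayama algebra: all finitely generated indecomposable modules are serial. -/
def IsNakayama : Prop :=
  ∀ M : ModuleCat.{0} A, Module.Finite A ↥M → Indec A M → IsUniserial A M

/-- `A` is connected: it is not a nontrivial product of algebras. -/
def IsConnectedAlgebra : Prop :=
  Nontrivial A ∧ ∀ e : A, IsIdempotentElem e → e ∈ Set.center A → e = 0 ∨ e = 1

/-- `A` is a cyclic Nakayama algebra: connected Nakayama with no simple projective module. -/
def IsCyclicNakayama : Prop :=
  IsNakayama A ∧ IsConnectedAlgebra A ∧
    ¬ ∃ S : ModuleCat.{0} A, IsSimpleModule A ↥S ∧ Projective S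

/-- `T ≅ top M` (and `top M` is simple): there is an essential epimorphism `M ⟶ T`. -/
def IsSimpleTopOf (M T : ModuleCat.{0} A) : Prop :=
  IsSimpleModule A ↥T ∧
    ∃ f : M ⟶ T, Epi f ∧ ∀ (N : ModuleCat.{0} A) (g : N ⟶ M), Epi (g ≫ f) → Epi g

/-- `S ≅ soc M` (and `soc M` is simple): there is an essential monomorphism `S ⟶ M`. -/
def IsSimpleSocOf (M S : ModuleCat.{0} A) : Prop :=
  IsSimpleModule A ↥S ∧
    ∃ f : S ⟶ M, Mono f ∧ ∀ (N : ModuleCat.{0} A) (g : M ⟶ N), Mono (f ≫ g) → Mono g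

/-- `0 ⟶ N ⟶ E ⟶ M ⟶ 0` is an almost split (Auslander-Reiten) sequence. -/
def IsAlmostSplitSeq {N E M : ModuleCat.{0} A} (f : N ⟶ E) (g : E ⟶ M) : Prop :=
  Mono f ∧ Epi g ∧ (∃ w : f ≫ g = 0, (ShortComplex.mk f g w).Exact) ∧
  (¬ ∃ s : M ⟶ E, s ≫ g = 𝟙 M) ∧ Indec A N ∧ Indec A M ∧
  ∀ (X : ModuleCat.{0} A) (h : X ⟶ M), (¬ ∃ s : M ⟶ X, s ≫ h = 𝟙 M) → ∃ h' : X ⟶ E, h' ≫ g = h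

/-- `N ≅ τ M`, the Auslander-Reiten translate of `M` : there is an almost split sequence
`0 ⟶ N ⟶ E ⟶ M ⟶ 0`. -/
def IsTauOf (N M : ModuleCat.{0} A) : Prop :=
  ∃ (E : ModuleCat.{0} A) (f : N ⟶ E) (g : E ⟶ M), IsAlmostSplitSeq A f g

/-- `U ≅ ψ S = τ⁻ top (I S)`. -/
def IsPsiOf (S U : ModuleCat.{0} A) : Prop :=
  ∃ I, IsInjEnvOf A S I ∧ ∃ T, IsSimpleTopOf A I T ∧ IsTauOf A T U

/-- `T ≅ γ S = τ soc (P S)`. -/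
def IsGammaOf (S T : ModuleCat.{0} A) : Prop :=
  ∃ P, IsProjCoverOf A S P ∧ ∃ U, IsSimpleSocOf A P U ∧ IsTauOf A T U

/-- `T ≅ φ S = top (I S)`. -/
def IsPhiOf (S T : ModuleCat.{0} A) : Prop :=
  ∃ I, IsInjEnvOf A S I ∧ IsSimpleTopOf A I T

/-- There is a `ψ`-path `(S_1, …, S_m)` of cardinality `m` ending in `S`. -/
def PsiPathTo (m : ℕ) (S : ModuleCat.{0} A) : Prop :=
  1 ≤ m ∧ ∃ c : ℕ → ModuleCat.{0} A,
    (∀ i < m, IsSimpleModule A ↥(c i)) ∧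
    (∀ i, i + 1 < m → IsPsiOf A (c i) (c (i + 1))) ∧
    Nonempty (c (m - 1) ≅ S)

/-- `a(S)`: the supremum of the cardinalities of `ψ`-paths ending in `S`. -/
def aVal (S : ModuleCat.{0} A) : ℕ∞ :=
  sSup {d : ℕ∞ | ∃ m : ℕ, d = m ∧ PsiPathTo A m S}

/-- `a(A)`: the maximum of `a(S)` over the simple modules which are not `ψ`-cyclic. -/
def aAlg : ℕ∞ :=
  sSup {d : ℕ∞ | ∃ S : ModuleCat.{0} A, IsSimpleModule A ↥S ∧ aVal A S ≠ ⊤ ∧ aVal A S = d}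

/-- `S` is a composition factor of `M`: a simple subquotient of `M`. -/
def IsCompFactorOf (S M : ModuleCat.{0} A) : Prop :=
  IsSimpleModule A ↥S ∧ ∃ N' N : Submodule A ↥M, N' ≤ N ∧
    Nonempty ((↥N ⧸ N'.comap N.subtype) ≃ₗ[A] ↥S)

/-- `e(S) = min {pd S, pd (I S)} = x`. -/
def ERelVal (S : ModuleCat.{0} A) (x : ℕ∞) : Prop :=
  ∃ I, IsInjEnvOf A S I ∧ x = min (projDim A S) (projDim A I)

/-- `e*(S) = min {id S, id (P S)} = x`. -/
def EStarVal (S : ModuleCat.{0} A) (x : ℕ∞) : Prop :=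
  ∃ P, IsProjCoverOf A S P ∧ x = min (injDim A S) (injDim A P)

/-- `T = h(S) = top (Ω^{e(S)} N S)`, the homological permutation. -/
def HRel (S T : ModuleCat.{0} A) : Prop :=
  IsSimpleModule A ↥S ∧ IsSimpleModule A ↥T ∧
  ∃ z : ℕ, ERelVal A S z ∧
    ∃ N, ((Odd z ∧ N = S) ∨ (Even z ∧ IsInjEnvOf A S N)) ∧
      ∃ X, IsNthSyzygy A z N X ∧ IsSimpleTopOf A X T

/-- `S = h*(T) = soc (Σ^{e*(T)} N* T)`, the inverse homological permutation. -/
def HStarRel (T S : ModuleCat.{0} A) : Prop :=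
  IsSimpleModule A ↥T ∧ IsSimpleModule A ↥S ∧
  ∃ z : ℕ, EStarVal A T z ∧
    ∃ N, ((Odd z ∧ N = T) ∨ (Even z ∧ IsProjCoverOf A T N)) ∧
      ∃ X, IsNthCosyzygy A z N X ∧ IsSimpleSocOf A X S

/-- The `t`-fold relational iterate of a relation on modules (up to isomorphism). -/
def IterRel (r : ModuleCat.{0} A → ModuleCat.{0} A → Prop) :
    ℕ → ModuleCat.{0} A → ModuleCat.{0} A → Prop
  | 0, X, Y => Nonempty (X ≅ Y)
  | n + 1, X, Y => ∃ Z, r X Z ∧ IterRel r n Z Y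

end ArtinAlg

namespace NakPf

open ArtinAlg

variable {A : Type} [Ring A]

/-- finite and uniserial -/
def Good (M : ModuleCat.{0} A) : Prop := Module.Finite A ↥M ∧ IsUniserial A M

lemma uni_of_inj {N M : ModuleCat.{0} A} (f : ↥N →ₗ[A] ↥M) (hf : Function.Injective f)
    (h : IsUniserial A M) : IsUniserial A N := by
  intro N₁ N₂
  rcases h (N₁.map f) (N₂.map f) with h | h
  · exact Or.inl ((Submodule.map_le_map_iff_of_injective hf _ _).1 h)
  · exact Or.inr ((Submodule.map_le_map_iff_of_injective hf _ _).1 h)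

lemma uni_of_surj {N M : ModuleCat.{0} A} (f : ↥N →ₗ[A] ↥M) (hf : Function.Surjective f)
    (h : IsUniserial A N) : IsUniserial A M := by
  intro N₁ N₂
  rcases h (N₁.comap f) (N₂.comap f) with h | h
  · exact Or.inl ((Submodule.comap_le_comap_iff_of_surjective hf).1 h)
  · exact Or.inr ((Submodule.comap_le_comap_iff_of_surjective hf).1 h)

lemma good_of_inj [IsNoetherianRing A] {N M : ModuleCat.{0} A} (f : ↥N →ₗ[A] ↥M)
    (hf : Function.Injective f) (h : Good M) : Good N :=
  have := h.1
  ⟨Module.Finite.of_injective f hf, uni_of_inj f hf h.2⟩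

lemma good_of_surj {N M : ModuleCat.{0} A} (f : ↥N →ₗ[A] ↥M)
    (hf : Function.Surjective f) (h : Good N) : Good M :=
  have := h.1
  ⟨Module.Finite.of_surjective f hf, uni_of_surj f hf h.2⟩

/-- `K` is the kernel of a surjection from a finite uniserial projective onto `M`. -/
def IsSyz (M K : ModuleCat.{0} A) : Prop :=
  ∃ (P : ModuleCat.{0} A) (i : ↥K →ₗ[A] ↥P) (p : ↥P →ₗ[A] ↥M), Projective P ∧ Good P ∧
    Function.Injective i ∧ Function.Surjective p ∧ Function.Exact i p

lemma IsSyz.good [IsNoetherianRing A] {M K : ModuleCat.{0} A} (h : IsSyz M K) : Good K := by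
  obtain ⟨P, i, p, hP, hG, hi, hp, he⟩ := h
  exact good_of_inj i hi hG

lemma D_zero {M : ModuleCat.{0} A} : HasProjectiveDimensionLT M 0 ↔ Subsingleton ↥M := by
  rw [hasProjectiveDimensionLT_zero_iff_isZero, ModuleCat.isZero_iff_subsingleton]

lemma D_iso {M N : ModuleCat.{0} A} (f : ↥M →ₗ[A] ↥N) (hf : Function.Bijective f) (n : ℕ) :
    HasProjectiveDimensionLT M n ↔ HasProjectiveDimensionLT N n := by
  have e : M ≅ N := (LinearEquiv.ofBijective f hf).toModuleIso
  exact ⟨fun h => hasProjectiveDimensionLT_of_iso e n,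
    fun h => hasProjectiveDimensionLT_of_iso e.symm n⟩

lemma IsSyz.D {M K : ModuleCat.{0} A} (h : IsSyz M K) [Nontrivial ↥M] (n : ℕ) :
    HasProjectiveDimensionLT M (n + 1) ↔ HasProjectiveDimensionLT K n := by
  obtain ⟨P, i, p, hP, hG, hi, hp, he⟩ := h
  cases n with
  | zero =>
    rw [D_zero, zero_add, ← projective_iff_hasProjectiveDimensionLT_one]
    constructor
    · intro hM
      have : Module.Projective A ↥M := by
        rw [IsProjective.iff_projective]; exact hM
      obtain ⟨s, hs⟩ := Module.projective_lifting_property p LinearMap.id hp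
      have hs' : ∀ x, p (s x) = x := fun x => LinearMap.congr_fun hs x
      rcases hG.2 (LinearMap.range s) (LinearMap.range i) with h | h
      · exfalso
        obtain ⟨x, hx⟩ := exists_ne (0 : ↥M)
        obtain ⟨k, hk⟩ := h ⟨x, rfl⟩
        apply hx
        rw [← hs' x, ← hk]
        exact (he _).2 ⟨k, rfl⟩
      · have : ∀ k : ↥K, k = 0 := by
          intro k
          obtain ⟨x, hx⟩ := h ⟨k, rfl⟩
          have : p (i k) = 0 := (he _).2 ⟨k, rfl⟩
          rw [← hx, hs'] at this
          apply hi
          rw [← hx, this, map_zero, map_zero]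
        exact ⟨fun a b => (this a).trans (this b).symm⟩
    · intro hK
      have hinj : Function.Injective p := by
        rw [injective_iff_map_eq_zero]
        intro a ha
        obtain ⟨k, rfl⟩ := (he _).1 ha
        rw [Subsingleton.elim k 0, map_zero]
      exact Projective.of_iso (LinearEquiv.ofBijective p ⟨hinj, hp⟩).toModuleIso hP
  | succ n =>
    have hS := ModuleCat.shortComplex_shortExact
      (ShortComplex.mk (ModuleCat.ofHom i) (ModuleCat.ofHom p)
        (by ext x; exact (he _).2 ⟨x, rfl⟩)) he hi hp
    exact hS.hasProjectiveDimensionLT_X₃_iff n hP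

lemma D_mono {M : ModuleCat.{0} A} {m n : ℕ} (h : m ≤ n) (hM : HasProjectiveDimensionLT M m) :
    HasProjectiveDimensionLT M n := hasProjectiveDimensionLT_of_ge M m n h

/-- existence of covers -/
lemma exists_cover [IsArtinianRing A] (hNak : IsNakayama A) (M : ModuleCat.{0} A) (hM : Good M)
    [Nontrivial ↥M] : ∃ (P : ModuleCat.{0} A) (p : ↥P →ₗ[A] ↥M), Projective P ∧ Good P ∧
      Function.Surjective p := by
  classical
  let Q : ℕ∞ → Prop := fun n => ∃ (P : ModuleCat.{0} A) (p : ↥P →ₗ[A] ↥M),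
    Module.Projective A ↥P ∧ Module.Finite A ↥P ∧ Function.Surjective p ∧ Module.length A ↥P = n
  have hex : ∃ n, Q n := by
    have := hM.1
    obtain ⟨n, f, hf⟩ := Module.Finite.exists_fin' A ↥M
    exact ⟨_, ModuleCat.of A (Fin n → A), f, inferInstanceAs (Module.Projective A (Fin n → A)),
      inferInstanceAs (Module.Finite A (Fin n → A)), hf, rfl⟩
  obtain ⟨n, ⟨P, p, hP, hfin, hp, hn⟩, hmin⟩ := WellFounded.has_min
    (wellFounded_lt (α := ℕ∞)) {n | Q n} hex
  have key : ∀ (N₁ N₂ : Submodule A ↥P), IsCompl N₁ N₂ → N₂.map p ≤ N₁.map p → N₂ = ⊥ := by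
    intro N₁ N₂ hc hle
    by_contra hne
    have hN₁ : N₁ ≠ ⊤ := by
      rintro rfl
      exact hne (by simpa using hc.inf_eq_bot)
    apply hmin (Module.length A ↥N₁) _ (hn ▸ Submodule.length_lt hN₁)
    refine ⟨ModuleCat.of A ↥N₁, p ∘ₗ N₁.subtype, ?_, ?_, ?_, rfl⟩
    · refine Module.Projective.of_split N₁.subtype (Submodule.projectionOnto N₁ N₂ hc) ?_
      ext x
      simp
    · exact inferInstanceAs (Module.Finite A ↥N₁)
    · have : N₁.map p = ⊤ := by
        rw [eq_top_iff, ← LinearMap.range_eq_top.2 hp, LinearMap.range_eq_map, ← hc.sup_eq_top,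
          Submodule.map_sup]
        exact sup_le le_rfl hle
      intro y
      obtain ⟨x, hx, rfl⟩ := (this ▸ Submodule.mem_top : y ∈ N₁.map p)
      exact ⟨⟨x, hx⟩, rfl⟩
  refine ⟨P, p, (IsProjective.iff_projective _).1 hP, ⟨hfin, hNak P hfin ⟨hp.nontrivial, ?_⟩⟩, hp⟩
  intro N₁ N₂ hc
  rcases hM.2 (N₁.map p) (N₂.map p) with h | h
  · exact Or.inl (key N₂ N₁ hc.symm h)
  · exact Or.inr (key N₁ N₂ hc h)

/-- short exact sequences -/
def SES (X Y Z : ModuleCat.{0} A) : Prop :=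
  ∃ (f : ↥X →ₗ[A] ↥Y) (g : ↥Y →ₗ[A] ↥Z), Function.Injective f ∧ Function.Surjective g ∧
    Function.Exact f g

lemma rotate [IsArtinianRing A] (hNak : IsNakayama A) {X Y Z : ModuleCat.{0} A} (h : SES X Y Z)
    (hY : Good Y) [Nontrivial ↥Z] : ∃ KY KZ : ModuleCat.{0} A, IsSyz Y KY ∧ IsSyz Z KZ ∧
      SES KY KZ X := by
  obtain ⟨f, g, hf, hg, he⟩ := h
  have : Nontrivial ↥Y := hg.nontrivial
  obtain ⟨P, p, hP, hG, hp⟩ := exists_cover hNak Y hY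
  have hle : LinearMap.ker p ≤ LinearMap.ker (g ∘ₗ p) := by
    intro x hx
    have hx' : p x = 0 := hx
    simp [hx']
  have hmem : ∀ x : LinearMap.ker (g ∘ₗ p), p x ∈ LinearMap.range f := fun x => (he _).1 x.2
  let q : LinearMap.ker (g ∘ₗ p) →ₗ[A] ↥X := (LinearEquiv.ofInjective f hf).symm.toLinearMap ∘ₗ
    LinearMap.codRestrict (LinearMap.range f) (p ∘ₗ Submodule.subtype _) hmem
  have hq : ∀ x, f (q x) = p x := by
    intro x
    have := LinearEquiv.apply_symm_apply (LinearEquiv.ofInjective f hf) ⟨p x, hmem x⟩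
    exact congrArg Subtype.val this
  refine ⟨ModuleCat.of A (LinearMap.ker p), ModuleCat.of A (LinearMap.ker (g ∘ₗ p)),
    ⟨P, Submodule.subtype _, p, hP, hG, Subtype.val_injective, hp, LinearMap.exact_subtype_ker_map p⟩,
    ⟨P, Submodule.subtype _, g ∘ₗ p, hP, hG, Subtype.val_injective, hg.comp hp,
      LinearMap.exact_subtype_ker_map _⟩,
    Submodule.inclusion hle, q, Submodule.inclusion_injective hle, ?_, ?_⟩
  · intro x
    obtain ⟨y, hy⟩ := hp (f x)
    refine ⟨⟨y, ?_⟩, ?_⟩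
    · have : g (p y) = 0 := by rw [hy]; exact (he _).2 ⟨x, rfl⟩
      exact this
    · apply hf; rw [hq]; exact hy
  · intro y
    constructor
    · intro hy
      have := hq y
      rw [hy, map_zero] at this
      exact ⟨⟨y.1, this.symm⟩, rfl⟩
    · rintro ⟨x, rfl⟩
      apply hf
      rw [hq, map_zero]
      exact x.2


/-- `pd M = 2k+1` -/
def O (k : ℕ) (M : ModuleCat.{0} A) : Prop :=
  HasProjectiveDimensionLT M (2 * k + 2) ∧ ¬ HasProjectiveDimensionLT M (2 * k + 1)

lemma O_iso {M N : ModuleCat.{0} A} (f : ↥M →ₗ[A] ↥N) (hf : Function.Bijective f) (n : ℕ) :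
    O n M ↔ O n N := by
  unfold O
  rw [D_iso f hf, D_iso f hf]

lemma O.unique {M : ModuleCat.{0} A} {a b : ℕ} (h : O a M) (h' : O b M) : a = b := by
  rcases lt_trichotomy a b with hl | hl | hl
  · exact absurd (D_mono (by omega) h.1) h'.2
  · exact hl
  · exact absurd (D_mono (by omega) h'.1) h.2

lemma O.syz_nontrivial {M K : ModuleCat.{0} A} {k : ℕ} (h : O k M) [Nontrivial ↥M]
    (hs : IsSyz M K) : Nontrivial ↥K := by
  rw [← not_subsingleton_iff_nontrivial, ← D_zero, ← hs.D]
  exact fun h' => h.2 (D_mono (by omega) h')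

lemma O_zero {M K L : ModuleCat.{0} A} [Nontrivial ↥M] [Nontrivial ↥K]
    (hs : IsSyz M K) (hs' : IsSyz K L) : O 0 M ↔ Subsingleton ↥L := by
  unfold O
  rw [hs.D, hs.D, hs'.D, D_zero, D_zero]
  have := not_subsingleton ↥K
  tauto

lemma O_succ {M K L : ModuleCat.{0} A} [Nontrivial ↥M] [Nontrivial ↥K]
    (hs : IsSyz M K) (hs' : IsSyz K L) (k : ℕ) : O (k + 1) M ↔ O k L := by
  unfold O
  rw [show 2 * (k + 1) + 2 = 2 * k + 2 + 1 + 1 by ring,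
    show 2 * (k + 1) + 1 = 2 * k + 1 + 1 + 1 by ring, hs.D, hs.D, hs'.D, hs'.D]

lemma SES.left {X Y Z : ModuleCat.{0} A} (h : SES X Y Z) [Subsingleton ↥X] (k : ℕ) :
    O k Y ↔ O k Z := by
  obtain ⟨f, g, hf, hg, he⟩ := h
  refine O_iso g ⟨?_, hg⟩ k
  rw [injective_iff_map_eq_zero]
  intro a ha
  obtain ⟨x, rfl⟩ := (he _).1 ha
  rw [Subsingleton.elim x 0, map_zero]

lemma SES.right {X Y Z : ModuleCat.{0} A} (h : SES X Y Z) [Subsingleton ↥Z] (k : ℕ) :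
    O k X ↔ O k Y := by
  obtain ⟨f, g, hf, hg, he⟩ := h
  exact O_iso f ⟨hf, fun y => (he y).1 (Subsingleton.elim _ _)⟩ k

lemma SES.mid {X Y Z : ModuleCat.{0} A} (h : SES X Y Z) :
    Subsingleton ↥Y ↔ Subsingleton ↥X ∧ Subsingleton ↥Z := by
  obtain ⟨f, g, hf, hg, he⟩ := h
  constructor
  · intro hY
    exact ⟨hf.subsingleton, hg.subsingleton⟩
  · rintro ⟨hX, hZ⟩
    exact Function.Surjective.subsingleton (f := f)
      (fun y => (he y).1 (Subsingleton.elim _ _))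

lemma SES.nontrivial_left {X Y Z : ModuleCat.{0} A} (h : SES X Y Z) [Nontrivial ↥X] :
    Nontrivial ↥Y := by
  obtain ⟨f, g, hf, hg, he⟩ := h
  exact hf.nontrivial

lemma SES.nontrivial_right {X Y Z : ModuleCat.{0} A} (h : SES X Y Z) [Nontrivial ↥Z] :
    Nontrivial ↥Y := by
  obtain ⟨f, g, hf, hg, he⟩ := h
  exact hg.nontrivial

lemma rotate2 [IsArtinianRing A] (hNak : IsNakayama A) {X Y Z : ModuleCat.{0} A} (h : SES X Y Z)
    (hY : Good Y) [Nontrivial ↥X] [Nontrivial ↥Z] : ∃ KX KY KZ L : ModuleCat.{0} A,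
      IsSyz X KX ∧ IsSyz Y KY ∧ IsSyz Z KZ ∧ IsSyz KZ L ∧ SES KY KZ X ∧ SES L KX KY := by
  obtain ⟨KY, KZ, h1, h2, h3⟩ := rotate hNak h hY
  obtain ⟨L, KX, h4, h5, h6⟩ := rotate hNak h3 h2.good
  exact ⟨KX, KY, KZ, L, h5, h1, h2, h4, h3, h6⟩

lemma main1 [IsArtinianRing A] (hNak : IsNakayama A) (k : ℕ) : ∀ {X Y Z : ModuleCat.{0} A}
    (_ : SES X Y Z) (_ : Good Y) (_ : Nontrivial ↥X) (_ : Nontrivial ↥Z),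
    O k Y → ∃ a b, O a X ∧ O b Z ∧ k = max a b := by
  induction k with
  | zero =>
    intro X Y Z h hY hX hZ hk
    have := h.nontrivial_left
    obtain ⟨KX, KY, KZ, L, sX, sY, sZ, sL, e1, e2⟩ := rotate2 hNak h hY
    have nY : Nontrivial ↥KY := hk.syz_nontrivial sY
    have nX := e2.nontrivial_right
    have nZ := e1.nontrivial_left
    obtain ⟨LX, LY, tX, tY, e3⟩ := rotate hNak e2 sX.good
    have hLY := (O_zero sY tY).1 hk
    have hh := e3.mid.1 hLY
    exact ⟨0, 0, (O_zero sX tX).2 hh.1, (O_zero sZ sL).2 hh.2, rfl⟩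
  | succ k ih =>
    intro X Y Z h hY hX hZ hk
    have := h.nontrivial_left
    obtain ⟨KX, KY, KZ, L, sX, sY, sZ, sL, e1, e2⟩ := rotate2 hNak h hY
    have nY : Nontrivial ↥KY := hk.syz_nontrivial sY
    have nX := e2.nontrivial_right
    have nZ := e1.nontrivial_left
    obtain ⟨LX, LY, tX, tY, e3⟩ := rotate hNak e2 sX.good
    have hLY := (O_succ sY tY k).1 hk
    rcases subsingleton_or_nontrivial ↥LX with h1 | h1
    · exact ⟨0, k + 1, (O_zero sX tX).2 h1, (O_succ sZ sL k).2 ((e3.left k).1 hLY), by simp⟩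
    rcases subsingleton_or_nontrivial ↥L with h2 | h2
    · exact ⟨k + 1, 0, (O_succ sX tX k).2 ((e3.right k).2 hLY), (O_zero sZ sL).2 h2, by simp⟩
    obtain ⟨a, b, ha, hb, hab⟩ := ih e3 tY.good h1 h2 hLY
    exact ⟨a + 1, b + 1, (O_succ sX tX a).2 ha, (O_succ sZ sL b).2 hb, by omega⟩

lemma nontriv_aux {X Z KX KY KZ L : ModuleCat.{0} A} [Nontrivial ↥X] [Nontrivial ↥Z]
    (sX : IsSyz X KX) (sZ : IsSyz Z KZ) (sL : IsSyz KZ L) (e1 : SES KY KZ X) (e2 : SES L KX KY)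
    {a b : ℕ} (ha : O a X) (hb : O b Z) : Nontrivial ↥KY := by
  rw [← not_subsingleton_iff_nontrivial]
  intro hK
  obtain ⟨f, g, hf, hg, he⟩ := e1
  have hbij : Function.Bijective g := by
    refine ⟨?_, hg⟩
    rw [injective_iff_map_eq_zero]
    intro a ha
    obtain ⟨x, rfl⟩ := (he _).1 ha
    rw [Subsingleton.elim x 0, map_zero]
  have key : ∀ n, HasProjectiveDimensionLT Z (n + 1) ↔ HasProjectiveDimensionLT X n :=
    fun n => (sZ.D n).trans (D_iso g hbij n)
  have h1 : HasProjectiveDimensionLT X (2 * b + 1) := (key _).1 hb.1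
  have h2 : ¬ HasProjectiveDimensionLT X (2 * b) := fun h => hb.2 ((key _).2 h)
  rcases le_or_gt b a with hl | hl
  · exact ha.2 (D_mono (by omega) h1)
  · exact h2 (D_mono (by omega) ha.1)

lemma main2 [IsArtinianRing A] (hNak : IsNakayama A) (a : ℕ) : ∀ {X Y Z : ModuleCat.{0} A}
    (_ : SES X Y Z) (_ : Good Y) (_ : Nontrivial ↥X) (_ : Nontrivial ↥Z) (b : ℕ),
    O a X → O b Z → ∃ k, O k Y := by
  induction a with
  | zero =>
    intro X Y Z h hY hX hZ b ha hb
    have := h.nontrivial_left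
    obtain ⟨KX, KY, KZ, L, sX, sY, sZ, sL, e1, e2⟩ := rotate2 hNak h hY
    have nX : Nontrivial ↥KX := ha.syz_nontrivial sX
    have nZ : Nontrivial ↥KZ := hb.syz_nontrivial sZ
    have nY : Nontrivial ↥KY := nontriv_aux sX sZ sL e1 e2 ha hb
    obtain ⟨LX, LY, tX, tY, e3⟩ := rotate hNak e2 sX.good
    have h1 := (O_zero sX tX).1 ha
    cases b with
    | zero => exact ⟨0, (O_zero sY tY).2 (e3.mid.2 ⟨h1, (O_zero sZ sL).1 hb⟩)⟩
    | succ b => exact ⟨b + 1, (O_succ sY tY b).2 ((e3.left b).2 ((O_succ sZ sL b).1 hb))⟩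
  | succ a ih =>
    intro X Y Z h hY hX hZ b ha hb
    have := h.nontrivial_left
    obtain ⟨KX, KY, KZ, L, sX, sY, sZ, sL, e1, e2⟩ := rotate2 hNak h hY
    have nX : Nontrivial ↥KX := ha.syz_nontrivial sX
    have nZ : Nontrivial ↥KZ := hb.syz_nontrivial sZ
    have nY : Nontrivial ↥KY := nontriv_aux sX sZ sL e1 e2 ha hb
    obtain ⟨LX, LY, tX, tY, e3⟩ := rotate hNak e2 sX.good
    have h1 := (O_succ sX tX a).1 ha
    rcases subsingleton_or_nontrivial ↥L with h2 | h2
    · exact ⟨a + 1, (O_succ sY tY a).2 ((e3.right a).1 h1)⟩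
    rcases subsingleton_or_nontrivial ↥LX with h3 | h3
    · exact absurd (D_mono (by omega) (D_zero.2 h3)) h1.2
    cases b with
    | zero => exact absurd h2 (not_nontrivial_iff_subsingleton.2 ((O_zero sZ sL).1 hb))
    | succ b =>
      obtain ⟨k, hk⟩ := ih e3 tY.good h3 h2 b h1 ((O_succ sZ sL b).1 hb)
      exact ⟨k + 1, (O_succ sY tY k).2 hk⟩

/-- composition factors, convenient form -/
def Fac (S M : ModuleCat.{0} A) : Prop :=
  IsSimpleModule A ↥S ∧ ∃ (N : Submodule A ↥M) (g : ↥N →ₗ[A] ↥S), Function.Surjective g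

lemma fac_iff (S M : ModuleCat.{0} A) : IsCompFactorOf A S M ↔ Fac S M := by
  constructor
  · rintro ⟨hS, N', N, hle, ⟨e⟩⟩
    exact ⟨hS, N, e.toLinearMap ∘ₗ Submodule.mkQ _,
      e.surjective.comp (Submodule.mkQ_surjective _)⟩
  · rintro ⟨hS, N, g, hg⟩
    refine ⟨hS, (LinearMap.ker g).map N.subtype, N, Submodule.map_subtype_le _ _, ⟨?_⟩⟩
    have : ((LinearMap.ker g).map N.subtype).comap N.subtype = LinearMap.ker g :=
      Submodule.comap_map_eq_of_injective Subtype.val_injective _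
    exact (Submodule.quotEquivOfEq _ _ this).trans (g.quotKerEquivOfSurjective hg)

lemma Fac.of_sub {S M : ModuleCat.{0} A} {X : Submodule A ↥M} (h : Fac S (ModuleCat.of A ↥X)) :
    Fac S M := by
  obtain ⟨hS, N, g, hg⟩ := h
  let e := Submodule.equivMapOfInjective X.subtype Subtype.val_injective N
  exact ⟨hS, Submodule.map X.subtype N, g ∘ₗ e.symm.toLinearMap, hg.comp e.symm.surjective⟩

lemma Fac.of_quot {S M : ModuleCat.{0} A} {X : Submodule A ↥M}
    (h : Fac S (ModuleCat.of A (↥M ⧸ X))) : Fac S M := by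
  obtain ⟨hS, N, g, hg⟩ := h
  refine ⟨hS, Submodule.comap X.mkQ N, g ∘ₗ X.mkQ.restrict (fun x hx => hx), hg.comp ?_⟩
  rintro ⟨y, hy⟩
  obtain ⟨x, rfl⟩ := X.mkQ_surjective y
  exact ⟨⟨x, hy⟩, rfl⟩

lemma Fac.split {S M : ModuleCat.{0} A} (h : Fac S M) (hM : IsUniserial A M)
    (X : Submodule A ↥M) : Fac S (ModuleCat.of A ↥X) ∨ Fac S (ModuleCat.of A (↥M ⧸ X)) := by
  obtain ⟨hS, N, g, hg⟩ := h
  rcases hM N X with hl | hl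
  · left
    refine ⟨hS, N.comap X.subtype, g ∘ₗ X.subtype.restrict (fun x hx => hx), hg.comp ?_⟩
    rintro ⟨y, hy⟩
    exact ⟨⟨⟨y, hl hy⟩, hy⟩, rfl⟩
  · rcases eq_bot_or_eq_top (LinearMap.range (g ∘ₗ Submodule.inclusion hl)) with h | h
    · right
      have hz : ∀ x : ↥X, g (Submodule.inclusion hl x) = 0 := fun x =>
        LinearMap.congr_fun (LinearMap.range_eq_bot.1 h) x
      let φ : ↥N →ₗ[A] ↥(N.map X.mkQ) := X.mkQ.restrict (fun x hx => ⟨x, hx, rfl⟩)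
      have hφ : Function.Surjective φ := by
        rintro ⟨y, x, hx, rfl⟩
        exact ⟨⟨x, hx⟩, rfl⟩
      have hk : LinearMap.ker φ ≤ LinearMap.ker g := by
        intro x hx
        have h1 : X.mkQ (x : ↥M) = 0 := congrArg Subtype.val (show φ x = 0 from hx)
        have h2 : (x : ↥M) ∈ X := by simpa using h1
        exact hz ⟨x, h2⟩
      let ψ : ↥(N.map X.mkQ) →ₗ[A] ↥S := (LinearMap.ker φ).liftQ g hk ∘ₗ
        (φ.quotKerEquivOfSurjective hφ).symm.toLinearMap
      refine ⟨hS, N.map X.mkQ, ψ, ?_⟩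
      intro s
      obtain ⟨x, rfl⟩ := hg s
      refine ⟨φ.quotKerEquivOfSurjective hφ (Submodule.Quotient.mk x), ?_⟩
      change (LinearMap.ker φ).liftQ g hk ((φ.quotKerEquivOfSurjective hφ).symm _) = g x
      rw [LinearEquiv.symm_apply_apply]
      rfl
    · left
      refine ⟨hS, ⊤, (g ∘ₗ Submodule.inclusion hl) ∘ₗ Submodule.subtype _, ?_⟩
      have := LinearMap.range_eq_top.1 h
      intro s
      obtain ⟨x, hx⟩ := this s
      exact ⟨⟨x, trivial⟩, hx⟩

lemma ses_sub {M : ModuleCat.{0} A} (X : Submodule A ↥M) :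
    SES (ModuleCat.of A ↥X) M (ModuleCat.of A (↥M ⧸ X)) := by
  refine ⟨X.subtype, X.mkQ, Subtype.val_injective, X.mkQ_surjective, ?_⟩
  exact LinearMap.exact_subtype_mkQ X

lemma fac_simple {S M : ModuleCat.{0} A} (hM : IsSimpleModule A ↥M) (h : Fac S M) (k : ℕ) :
    O k M ↔ O k S := by
  obtain ⟨hS, N, g, hg⟩ := h
  have := IsSimpleModule.nontrivial A ↥S
  have hN : N = ⊤ := by
    rcases eq_bot_or_eq_top N with h | h
    · subst h
      have := hg.nontrivial
      exact absurd this (not_nontrivial _)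
    · exact h
  subst hN
  let g' : ↥M →ₗ[A] ↥S := g ∘ₗ Submodule.topEquiv.symm.toLinearMap
  have hg' : Function.Surjective g' := hg.comp Submodule.topEquiv.symm.surjective
  refine O_iso g' ((LinearMap.bijective_of_ne_zero ?_)) k
  rintro h0
  obtain ⟨s, hs⟩ := exists_ne (0 : ↥S)
  obtain ⟨x, hx⟩ := hg' s
  exact hs (by rw [← hx, h0]; rfl)

lemma main3 [IsArtinianRing A] (hNak : IsNakayama A) (n : ℕ) : ∀ (M : ModuleCat.{0} A),
    Good M → Nontrivial ↥M → Module.length A ↥M = n →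
    (∀ k, O k M → (∀ S, Fac S M → ∃ j ≤ k, O j S) ∧ ∃ S, Fac S M ∧ O k S) ∧
    ((∀ S, Fac S M → ∃ j, O j S) → ∃ k, O k M) := by
  induction n using Nat.strong_induction_on with
  | _ n ih =>
  intro M hM hn hlen
  by_cases hs : IsSimpleModule A ↥M
  · have hself : Fac M M := ⟨hs, ⊤, Submodule.subtype _, fun x => ⟨⟨x, trivial⟩, rfl⟩⟩
    exact ⟨fun k hk => ⟨fun S hS => ⟨k, le_rfl, (fac_simple hs hS k).1 hk⟩, M, hself, hk⟩,
      fun h => h M hself⟩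
  · obtain ⟨X, hX0, hX1⟩ : ∃ X : Submodule A ↥M, X ≠ ⊥ ∧ X ≠ ⊤ := by
      by_contra hcon
      push Not at hcon
      apply hs
      rw [isSimpleModule_iff]
      exact { exists_pair_ne := ⟨⊥, ⊤, bot_ne_top⟩
              eq_bot_or_eq_top := fun a => or_iff_not_imp_left.2 (hcon a) }
    have hfin := hM.1
    have nX : Nontrivial ↥(ModuleCat.of A ↥X) := Submodule.nontrivial_iff_ne_bot.2 hX0
    have nZ : Nontrivial ↥(ModuleCat.of A (↥M ⧸ X)) := Submodule.Quotient.nontrivial_iff.2 hX1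
    have gX : Good (ModuleCat.of A ↥X) := good_of_inj X.subtype Subtype.val_injective hM
    have gZ : Good (ModuleCat.of A (↥M ⧸ X)) := good_of_surj X.mkQ X.mkQ_surjective hM
    have lX : Module.length A ↥X < n := hlen ▸ Submodule.length_lt hX1
    have lZ : Module.length A (↥M ⧸ X) < n := hlen ▸ Submodule.length_quotient_lt X hX0
    obtain ⟨x, hx⟩ := ENat.ne_top_iff_exists.1 (ne_top_of_lt lX)
    obtain ⟨z, hz⟩ := ENat.ne_top_iff_exists.1 (ne_top_of_lt lZ)
    rw [← hx] at lX
    rw [← hz] at lZ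
    obtain ⟨a1, a2⟩ := ih x (by exact_mod_cast lX) _ gX nX hx.symm
    obtain ⟨b1, b2⟩ := ih z (by exact_mod_cast lZ) _ gZ nZ hz.symm
    constructor
    · intro k hk
      obtain ⟨a, b, ha, hb, hab⟩ := main1 hNak k (ses_sub X) hM nX nZ hk
      obtain ⟨c1, S1, c2, c3⟩ := a1 a ha
      obtain ⟨d1, S2, d2, d3⟩ := b1 b hb
      constructor
      · intro S hS
        rcases hS.split hM.2 X with h | h
        · obtain ⟨j, hj, hO⟩ := c1 S h
          exact ⟨j, by omega, hO⟩
        · obtain ⟨j, hj, hO⟩ := d1 S h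
          exact ⟨j, by omega, hO⟩
      · rcases le_total a b with h | h
        · rw [max_eq_right h] at hab
          exact ⟨S2, d2.of_quot, hab ▸ d3⟩
        · rw [max_eq_left h] at hab
          exact ⟨S1, c2.of_sub, hab ▸ c3⟩
    · intro h
      obtain ⟨a, ha⟩ := a2 fun S hS => h S hS.of_sub
      obtain ⟨b, hb⟩ := b2 fun S hS => h S hS.of_quot
      exact main2 hNak a (ses_sub X) hM nX nZ b ha hb

lemma kernel_ses {M P : ModuleCat.{0} A} (f : P ⟶ M) [Epi f] (hP : Projective P) (n : ℕ) :
    HasProjectiveDimensionLT M (n + 2) ↔ HasProjectiveDimensionLT (kernel f) (n + 1) := by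
  have hS : (ShortComplex.mk (kernel.ι f) f (kernel.condition f)).ShortExact :=
    { exact := ShortComplex.exact_kernel f }
  exact hS.hasProjectiveDimensionLT_X₃_iff n hP

lemma projDimLE_iff (n : ℕ) : ∀ M : ModuleCat.{0} A,
    ProjDimLE A n M ↔ HasProjectiveDimensionLT M (n + 1) := by
  induction n with
  | zero =>
    intro M
    rw [zero_add, ← projective_iff_hasProjectiveDimensionLT_one]
    exact ⟨fun h => by cases h; assumption, fun h => .zero M h⟩
  | succ n ih =>
    intro M
    constructor
    · intro h
      cases h with
      | succ _ _ P f hP hf h => exact (kernel_ses f hP n).2 ((ih _).1 h)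
    · intro h
      refine .succ n M (Projective.over M) (Projective.π M) inferInstance inferInstance ?_
      exact (ih _).2 ((kernel_ses _ inferInstance n).1 h)

lemma projDim_le_iff (M : ModuleCat.{0} A) (n : ℕ) :
    projDim A M ≤ n ↔ HasProjectiveDimensionLT M (n + 1) := by
  constructor
  · intro h
    have hne : {d : ℕ∞ | ∃ n : ℕ, d = n ∧ ProjDimLE A n M}.Nonempty := by
      by_contra hc
      rw [Set.not_nonempty_iff_eq_empty] at hc
      rw [projDim, hc, sInf_empty] at h
      simp at h
    obtain ⟨m, hm, hd⟩ := csInf_mem hne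
    change projDim A M = m at hm
    rw [hm] at h
    exact D_mono (by have : m ≤ n := by exact_mod_cast h
                     omega) ((projDimLE_iff m M).1 hd)
  · intro h
    exact sInf_le ⟨n, rfl, (projDimLE_iff n M).2 h⟩

lemma projDim_eq_iff (M : ModuleCat.{0} A) (k : ℕ) :
    projDim A M = ((2 * k + 1 : ℕ) : ℕ∞) ↔ O k M := by
  unfold O
  rw [show 2 * k + 2 = (2 * k + 1) + 1 by ring, ← projDim_le_iff, ← projDim_le_iff]
  constructor
  · intro h
    rw [h]
    exact ⟨le_rfl, by rw [Nat.cast_le]; omega⟩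
  · rintro ⟨h1, h2⟩
    apply le_antisymm h1
    push Not at h2
    have := Order.add_one_le_of_lt h2
    exact_mod_cast this

lemma odd_iff (M : ModuleCat.{0} A) :
    (∃ n : ℕ, projDim A M = n ∧ Odd n) ↔ ∃ k, O k M := by
  constructor
  · rintro ⟨n, hn, k, rfl⟩
    exact ⟨k, (projDim_eq_iff M k).1 hn⟩
  · rintro ⟨k, hk⟩
    exact ⟨2 * k + 1, (projDim_eq_iff M k).2 hk, k, rfl⟩

end NakPf

open ArtinAlg in
/-- Let `A` be a Nakayama algebra and `M` an indecomposable module. Then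
`pd M` is finite and odd iff every composition factor of `M` has finite odd projective
dimension; and in that case `pd M` is the maximum of `pd S` over the composition
factors `S` of `M`. -/
theorem statement_7 (R : Type) [CommRing R] [IsArtinianRing R]
    (A : Type) [Ring A] [Algebra R A] [Module.Finite R A]
    (hNak : IsNakayama A)
    (M : ModuleCat.{0} A) (hM : Module.Finite A ↥M) (hInd : Indec A M) :
    ((∃ n : ℕ, projDim A M = n ∧ Odd n) ↔
      (∀ S : ModuleCat.{0} A, IsCompFactorOf A S M → ∃ n : ℕ, projDim A S = n ∧ Odd n)) ∧
    ((∃ n : ℕ, projDim A M = n ∧ Odd n) →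
      projDim A M =
        sSup {x : ℕ∞ | ∃ S : ModuleCat.{0} A, IsCompFactorOf A S M ∧ x = projDim A S}) := by
  have : IsArtinianRing A := IsArtinianRing.of_finite R A
  have hn := hInd.1
  have hG : NakPf.Good M := ⟨hM, hNak M hM hInd⟩
  obtain ⟨l, hl⟩ := ENat.ne_top_iff_exists.1 (Module.length_ne_top (R := A) (M := ↥M))
  obtain ⟨h1, h2⟩ := NakPf.main3 hNak l M hG hn hl.symm
  simp only [NakPf.odd_iff, NakPf.fac_iff]
  refine ⟨⟨?_, h2⟩, ?_⟩
  · rintro ⟨k, hk⟩ S hS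
    obtain ⟨j, -, hj⟩ := (h1 k hk).1 S hS
    exact ⟨j, hj⟩
  · rintro ⟨k, hk⟩
    obtain ⟨h3, S, hS, hSk⟩ := h1 k hk
    rw [(NakPf.projDim_eq_iff M k).2 hk]
    apply le_antisymm
    · exact le_sSup ⟨S, hS, ((NakPf.projDim_eq_iff S k).2 hSk).symm⟩
    · apply sSup_le
      rintro x ⟨T, hT, rfl⟩
      obtain ⟨j, hj, hO⟩ := h3 T hT
      rw [(NakPf.projDim_eq_iff T j).2 hO, Nat.cast_le]
      omega
end
end

section
/- Let A be a cyclic Nakayama algebra and S a simple module. Then a(S) is finite if and only if pd S is odd, and in that case pd S = 2·a(S) − 1 (in particular pd S < 2·a(S)). If a(S) is infinite, then pd IS is even and pd IS ≤ 2·a(A). -/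
open CategoryTheory CategoryTheory.Limits

noncomputable section

namespace Nak

set_option linter.unusedSectionVars false

section Basics

/-- Submodules form a chain. -/
def Uni (A M : Type) [Ring A] [AddCommGroup M] [Module A M] : Prop :=
  ∀ N₁ N₂ : Submodule A M, N₁ ≤ N₂ ∨ N₂ ≤ N₁

/-- Length as a natural number. -/
def len (A M : Type) [Ring A] [AddCommGroup M] [Module A M] : ℕ :=
  (Module.length A M).toNat

section Plain

variable {A : Type} [Ring A]
variable {M : Type} [AddCommGroup M] [Module A M]
variable {N : Type} [AddCommGroup N] [Module A N]

lemma len_congr (e : M ≃ₗ[A] N) : len A M = len A N := by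
  unfold len; rw [e.length_eq]

lemma len_top : len A (⊤ : Submodule A M) = len A M := len_congr Submodule.topEquiv

lemma len_bot : len A (⊥ : Submodule A M) = 0 := by
  unfold len; rw [Module.length_bot]; rfl

lemma len_range_inj (f : N →ₗ[A] M) (hf : Function.Injective f) :
    len A (LinearMap.range f) = len A N := (len_congr (LinearEquiv.ofInjective f hf)).symm

lemma surj_of_ne [IsSimpleModule A N] {f : M →ₗ[A] N} (hf : f ≠ 0) : Function.Surjective f :=
  LinearMap.surjective_of_ne_zero hf

lemma inj_of_ne [IsSimpleModule A N] {f : N →ₗ[A] M} (hf : f ≠ 0) : Function.Injective f :=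
  LinearMap.injective_of_ne_zero hf

lemma Uni.of_inj (h : Uni A M) (f : N →ₗ[A] M) (hf : Function.Injective f) : Uni A N := by
  intro K L
  rcases h (K.map f) (L.map f) with h | h
  · exact Or.inl ((Submodule.map_le_map_iff_of_injective hf _ _).1 h)
  · exact Or.inr ((Submodule.map_le_map_iff_of_injective hf _ _).1 h)

lemma Uni.of_surj (h : Uni A M) (f : M →ₗ[A] N) (hf : Function.Surjective f) : Uni A N := by
  intro K L
  rcases h (K.comap f) (L.comap f) with h | h
  · exact Or.inl ((Submodule.comap_le_comap_iff_of_surjective hf).1 h)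
  · exact Or.inr ((Submodule.comap_le_comap_iff_of_surjective hf).1 h)

lemma Uni.sub (h : Uni A M) (K : Submodule A M) : Uni A K := h.of_inj K.subtype K.injective_subtype

lemma Uni.quot (h : Uni A M) (K : Submodule A M) : Uni A (M ⧸ K) := h.of_surj K.mkQ K.mkQ_surjective

lemma len_simple [IsSimpleModule A N] : len A N = 1 := by
  unfold len; rw [Module.length_eq_one]; rfl

lemma mkQ_ne {K : Submodule A M} [IsSimpleModule A (M ⧸ K)] : K.mkQ ≠ 0 := by
  intro h
  have := IsSimpleModule.nontrivial A (M ⧸ K)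
  obtain ⟨x, hx⟩ := exists_ne (0 : M ⧸ K)
  obtain ⟨y, rfl⟩ := K.mkQ_surjective x
  rw [h] at hx; simp at hx

end Plain

variable {A : Type} [Ring A] [IsArtinianRing A]
variable {M : Type} [AddCommGroup M] [Module A M] [Module.Finite A M]
variable {N : Type} [AddCommGroup N] [Module A N]

lemma coe_len (A M : Type) [Ring A] [IsArtinianRing A] [AddCommGroup M] [Module A M]
    [Module.Finite A M] : ((len A M : ℕ) : ℕ∞) = Module.length A M :=
  ENat.natCast_toNat (Module.length_ne_top)

lemma len_add (K : Submodule A M) : len A K + len A (M ⧸ K) = len A M := by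
  have := Module.length_eq_add_of_exact K.subtype K.mkQ K.injective_subtype K.mkQ_surjective
    (LinearMap.exact_subtype_mkQ K)
  rw [← coe_len, ← coe_len, ← coe_len] at this
  exact_mod_cast this.symm

lemma fin_of_inj (f : N →ₗ[A] M) (hf : Function.Injective f) : Module.Finite A N :=
  Module.Finite.of_injective f hf

lemma len_le_inj (f : N →ₗ[A] M) (hf : Function.Injective f) : len A N ≤ len A M := by
  have := fin_of_inj f hf
  have := Module.length_le_of_injective f hf
  rw [← coe_len, ← coe_len] at this
  exact_mod_cast this

lemma len_le_surj (f : M →ₗ[A] N) (hf : Function.Surjective f) : len A N ≤ len A M := by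
  have := Module.Finite.of_surjective f hf
  have := Module.length_le_of_surjective f hf
  rw [← coe_len, ← coe_len] at this
  exact_mod_cast this

lemma len_lt {K : Submodule A M} (h : K ≠ ⊤) : len A K < len A M := by
  have := Submodule.length_lt h
  rw [← coe_len, ← coe_len] at this
  exact_mod_cast this

lemma len_eq_zero : len A M = 0 ↔ Subsingleton M := by
  rw [← Module.length_eq_zero_iff (R := A), ← coe_len]; norm_cast

lemma len_eq_one : len A M = 1 ↔ IsSimpleModule A M := by
  rw [← Module.length_eq_one_iff, ← coe_len]; norm_cast

lemma eq_top_of_len {K : Submodule A M} (h : len A M ≤ len A K) : K = ⊤ := by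
  by_contra hK
  exact absurd (len_lt hK) (not_lt.2 h)

lemma len_eq_zero_sub {K : Submodule A M} : len A K = 0 ↔ K = ⊥ := by
  rw [len_eq_zero, Submodule.subsingleton_iff_eq_bot]

lemma len_mono {K L : Submodule A M} (h : K ≤ L) : len A K ≤ len A L :=
  len_le_inj (Submodule.inclusion h) (Submodule.inclusion_injective h)

lemma eq_of_le_len {K L : Submodule A M} (h : K ≤ L) (h' : len A L ≤ len A K) : K = L := by
  refine le_antisymm h ?_
  have h1 : len A (K.comap L.subtype) = len A K :=
    len_congr (Submodule.comapSubtypeEquivOfLe h)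
  have := eq_top_of_len (K := K.comap L.subtype) (by rw [h1]; exact h')
  exact Submodule.comap_subtype_eq_top.1 this

lemma len_ker_range (f : M →ₗ[A] N) : len A (LinearMap.ker f) + len A (LinearMap.range f) = len A M := by
  rw [← len_add (LinearMap.ker f), len_congr f.quotKerEquivRange]

lemma surj_of_inj_len (f : N →ₗ[A] M) (hf : Function.Injective f) (h : len A M ≤ len A N) :
    Function.Surjective f := by
  rw [← LinearMap.range_eq_top]
  apply eq_top_of_len
  rwa [len_range_inj f hf]

lemma inj_of_surj_len (f : M →ₗ[A] N) (hf : Function.Surjective f) (h : len A M ≤ len A N) :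
    Function.Injective f := by
  have h1 := len_ker_range f
  rw [LinearMap.range_eq_top.2 hf, len_top] at h1
  rw [← LinearMap.ker_eq_bot, ← len_eq_zero_sub]
  omega

lemma len_ker_simple [IsSimpleModule A N] {f : M →ₗ[A] N} (hf : f ≠ 0) :
    len A (LinearMap.ker f) + 1 = len A M := by
  rw [← len_ker_range f, LinearMap.range_eq_top.2 (surj_of_ne hf), len_top, len_simple (N := N)]

/-- submodules of every length -/
lemma exists_sub : ∀ (n : ℕ) (M : Type) [AddCommGroup M] [Module A M] [Module.Finite A M],
    len A M = n → ∀ k ≤ n, ∃ K : Submodule A M, len A K = k := by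
  intro n
  induction n with
  | zero =>
    intro M _ _ _ hM k hk
    exact ⟨⊥, by rw [len_bot]; omega⟩
  | succ n ih =>
    intro M _ _ _ hM k hk
    rcases Nat.lt_or_ge n k with h | h
    · exact ⟨⊤, by rw [len_top]; omega⟩
    have hnt : Nontrivial M := by
      by_contra hnt
      rw [not_nontrivial_iff_subsingleton] at hnt
      rw [← len_eq_zero (A := A)] at hnt
      omega
    obtain ⟨K, hK⟩ := IsCoatomic.exists_coatom (Submodule A M)
    have hs : IsSimpleModule A (M ⧸ K) := isSimpleModule_iff_isCoatom.2 hK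
    have h1 := len_add K
    rw [len_simple (N := M ⧸ K)] at h1
    obtain ⟨L, hL⟩ := ih K (by omega) k h
    refine ⟨L.map K.subtype, ?_⟩
    rw [← hL]
    exact (len_congr (Submodule.equivMapOfInjective _ K.injective_subtype L)).symm

lemma exists_sub' {k : ℕ} (hk : k ≤ len A M) : ∃ K : Submodule A M, len A K = k :=
  exists_sub _ M rfl k hk

lemma Uni.eq_of_len (h : Uni A M) {K L : Submodule A M} (hl : len A K = len A L) : K = L := by
  rcases h K L with h | h
  · exact eq_of_le_len h hl.ge
  · exact (eq_of_le_len h hl.le).symm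

lemma Uni.le_of_len (h : Uni A M) {K L : Submodule A M} (hl : len A K ≤ len A L) : K ≤ L := by
  rcases h K L with h | h
  · exact h
  · exact (eq_of_le_len h hl).ge

/-- proper submodules lie in the kernel of a map to a simple module -/
lemma Uni.le_ker (h : Uni A M) [IsSimpleModule A N] {f : M →ₗ[A] N} (hf : f ≠ 0)
    {K : Submodule A M} (hK : K ≠ ⊤) : K ≤ LinearMap.ker f := by
  apply h.le_of_len
  have := len_ker_simple hf
  have := len_lt hK
  omega

/-- uniqueness of the simple top -/
lemma Uni.top_unique (h : Uni A M) {U V : Type} [AddCommGroup U] [Module A U] [IsSimpleModule A U]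
    [AddCommGroup V] [Module A V] [IsSimpleModule A V]
    {f : M →ₗ[A] U} (hf : f ≠ 0) {g : M →ₗ[A] V} (hg : g ≠ 0) : Nonempty (U ≃ₗ[A] V) := by
  have hk : LinearMap.ker f = LinearMap.ker g := by
    apply h.eq_of_len
    have := len_ker_simple hf
    have := len_ker_simple hg
    omega
  exact ⟨(f.quotKerEquivOfSurjective (surj_of_ne hf)).symm ≪≫ₗ
    (Submodule.quotEquivOfEq _ _ hk) ≪≫ₗ (g.quotKerEquivOfSurjective (surj_of_ne hg))⟩

/-- uniqueness of the simple socle -/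
lemma Uni.soc_unique (h : Uni A M) {U V : Type} [AddCommGroup U] [Module A U] [IsSimpleModule A U]
    [AddCommGroup V] [Module A V] [IsSimpleModule A V]
    {f : U →ₗ[A] M} (hf : f ≠ 0) {g : V →ₗ[A] M} (hg : g ≠ 0) : Nonempty (U ≃ₗ[A] V) := by
  have hk : LinearMap.range f = LinearMap.range g := by
    apply h.eq_of_len
    rw [len_range_inj f (inj_of_ne hf), len_range_inj g (inj_of_ne hg), len_simple, len_simple]
  exact ⟨(LinearEquiv.ofInjective f (inj_of_ne hf)) ≪≫ₗ
    (LinearEquiv.ofEq _ _ hk) ≪≫ₗ (LinearEquiv.ofInjective g (inj_of_ne hg)).symm⟩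

/-- a map to a uniserial module whose composite with the top is nonzero is onto -/
lemma Uni.surj_of_comp (h : Uni A M) {U : Type} [AddCommGroup U] [Module A U] [IsSimpleModule A U]
    {g : M →ₗ[A] U} (hg : g ≠ 0) {f : N →ₗ[A] M} (hf : g ∘ₗ f ≠ 0) : Function.Surjective f := by
  rw [← LinearMap.range_eq_top]
  by_contra hK
  apply hf
  ext x
  exact h.le_ker hg hK (LinearMap.mem_range_self f x)

/-- a map from a uniserial module, nonzero on a simple submodule, is injective -/
lemma Uni.inj_of_comp (h : Uni A M) {U : Type} [AddCommGroup U] [Module A U] [IsSimpleModule A U]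
    {g : U →ₗ[A] M} {f : M →ₗ[A] N} (hf : f ∘ₗ g ≠ 0) : Function.Injective f := by
  rw [← LinearMap.ker_eq_bot]
  have hg : g ≠ 0 := by rintro rfl; simp at hf
  by_contra hK
  have : LinearMap.range g ≤ LinearMap.ker f := by
    apply h.le_of_len
    rw [len_range_inj g (inj_of_ne hg), len_simple]
    rw [← len_eq_zero_sub] at hK
    omega
  apply hf
  ext x
  exact this (LinearMap.mem_range_self g x)

lemma exists_top [Nontrivial M] : ∃ K : Submodule A M, IsSimpleModule A (M ⧸ K) := by
  obtain ⟨K, hK⟩ := IsCoatomic.exists_coatom (Submodule A M)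
  exact ⟨K, isSimpleModule_iff_isCoatom.2 hK⟩

lemma nontrivial_of_len (h : 0 < len A M) : Nontrivial M := by
  by_contra hnt
  rw [not_nontrivial_iff_subsingleton, ← len_eq_zero (A := A)] at hnt
  omega

/-- finitely generated uniserial modules are cyclic; hence the length bound -/
lemma Uni.len_le (h : Uni A M) : len A M ≤ len A A := by
  rcases subsingleton_or_nontrivial M with hM | hM
  · rw [(len_eq_zero (A := A) (M := M)).2 hM]; omega
  obtain ⟨K, hK⟩ := exists_top (A := A) (M := M)
  have hne : K.mkQ ≠ 0 := mkQ_ne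
  obtain ⟨m, hm⟩ : ∃ m, K.mkQ m ≠ 0 := by
    by_contra hc; push Not at hc
    exact hne (LinearMap.ext hc)
  refine len_le_surj (LinearMap.toSpanSingleton A M m) (h.surj_of_comp hne ?_)
  intro h0
  apply hm
  have := LinearMap.congr_fun h0 (1 : A)
  simpa using this

end Basics

end Nak

namespace Nak

/-- Unbundled form of the Nakayama hypothesis. -/
def NakH (A : Type) [Ring A] : Prop :=
  ∀ (M : Type) [AddCommGroup M] [Module A M] [Module.Finite A M],
    (∀ N₁ N₂ : Submodule A M, IsCompl N₁ N₂ → N₁ = ⊥ ∨ N₂ = ⊥) → Uni A M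

lemma nakH_of {A : Type} [Ring A] (h : ArtinAlg.IsNakayama A) : NakH A := by
  intro M _ _ _ hi
  rcases subsingleton_or_nontrivial M with hM | hM
  · intro K L
    exact Or.inl (le_of_eq (Subsingleton.elim _ _))
  · exact h (ModuleCat.of A M) ‹_› ⟨hM, hi⟩

section Hull

variable {A : Type} [Ring A] [IsArtinianRing A]

/-- `f : T → X` has essential image, for `T` simple. -/
def Ess {T X : Type} [AddCommGroup T] [Module A T] [AddCommGroup X] [Module A X]
    (f : T →ₗ[A] X) : Prop := ∀ K : Submodule A X, K ≠ ⊥ → LinearMap.range f ≤ K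

lemma exists_max {p : ℕ → Prop} (b : ℕ) (h0 : ∃ n, p n) (hb : ∀ n, p n → n ≤ b) :
    ∃ n, p n ∧ ∀ m, p m → m ≤ n := by
  have hbdd : BddAbove {n | p n} := ⟨b, fun n hn => hb n hn⟩
  exact ⟨sSup {n | p n}, Nat.sSup_mem h0 hbdd, fun m hm => le_csSup hbdd hm⟩

variable {T X : Type} [AddCommGroup T] [Module A T] [IsSimpleModule A T]
  [AddCommGroup X] [Module A X]

lemma range_ne_bot {f : T →ₗ[A] X} (hf : f ≠ 0) : LinearMap.range f ≠ ⊥ := by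
  rwa [Ne, LinearMap.range_eq_bot]

lemma ess_fg (hN : NakH A) {f : T →ₗ[A] X} (hf : f ≠ 0) (he : Ess f) (K : Submodule A X)
    [Module.Finite A K] : Uni A K := by
  apply hN
  intro N₁ N₂ hc
  by_contra hcon
  push Not at hcon
  have h1 : LinearMap.range f ≤ N₁.map K.subtype := he _ (by
    intro h0
    rw [← Submodule.map_bot K.subtype] at h0
    exact hcon.1 (Submodule.map_injective_of_injective K.injective_subtype h0))
  have h2 : LinearMap.range f ≤ N₂.map K.subtype := he _ (by
    intro h0
    rw [← Submodule.map_bot K.subtype] at h0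
    exact hcon.2 (Submodule.map_injective_of_injective K.injective_subtype h0))
  apply range_ne_bot hf
  have h3 := le_inf h1 h2
  rw [← Submodule.map_inf _ K.injective_subtype, hc.inf_eq_bot, Submodule.map_bot] at h3
  exact le_bot_iff.1 h3

lemma ess_fin (hN : NakH A) {f : T →ₗ[A] X} (hf : f ≠ 0) (he : Ess f) :
    Module.Finite A X ∧ Uni A X := by
  obtain ⟨n, ⟨K, hK, hn⟩, hmax⟩ := exists_max (p := fun n => ∃ K : Submodule A X, K.FG ∧ len A K = n)
    (len A A) ⟨_, ⊥, Submodule.fg_bot, rfl⟩ (by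
      rintro n ⟨K, hK, rfl⟩
      have : Module.Finite A K := Module.Finite.iff_fg.2 hK
      exact (ess_fg hN hf he K).len_le)
  have htop : K = ⊤ := by
    rw [Submodule.eq_top_iff']
    intro x
    have hfg : (K ⊔ Submodule.span A {x}).FG := hK.sup (Submodule.fg_span_singleton x)
    have hle := hmax _ ⟨_, hfg, rfl⟩
    have : Module.Finite A (K ⊔ Submodule.span A {x} : Submodule A X) := Module.Finite.iff_fg.2 hfg
    have hs := surj_of_inj_len (Submodule.inclusion (le_sup_left : K ≤ K ⊔ Submodule.span A {x}))
      (Submodule.inclusion_injective _) (by omega)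
    obtain ⟨y, hy⟩ := hs ⟨x, Submodule.mem_sup_right (Submodule.mem_span_singleton_self x)⟩
    have : (y : X) = x := congrArg Subtype.val hy
    rw [← this]; exact y.2
  have hfin : Module.Finite A X := ⟨htop ▸ hK⟩
  refine ⟨hfin, ?_⟩
  exact (ess_fg hN hf he (⊤ : Submodule A X)).of_surj (Submodule.topEquiv (R := A) (M := X)).toLinearMap
    (Submodule.topEquiv (R := A) (M := X)).surjective

lemma Uni.ess [Module.Finite A X] (h : Uni A X) (f : T →ₗ[A] X) : Ess f := by
  intro K hK
  by_cases hf : f = 0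
  · subst hf; simp
  apply h.le_of_len
  rw [len_range_inj f (inj_of_ne hf), len_simple]
  rw [Ne, ← len_eq_zero_sub] at hK
  omega

lemma exists_compl {Q : Type} [AddCommGroup Q] [Module A Q] (K : Submodule A Q) :
    ∃ C : Submodule A Q, Disjoint K C ∧ ∀ D : Submodule A Q, C ≤ D → Disjoint K D → D = C := by
  obtain ⟨C, -, hC⟩ := zorn_le_nonempty₀ {C : Submodule A Q | Disjoint K C} (by
    intro c hc hchain y hy
    refine ⟨sSup c, ?_, fun z hz => le_sSup hz⟩
    have hd : DirectedOn (· ≤ ·) c := hchain.directedOn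
    show Disjoint K (sSup c)
    rw [hd.disjoint_sSup_right]
    intro z hz; exact hc hz) ⊥ disjoint_bot_right
  exact ⟨C, hC.1, fun D hD hd => le_antisymm (hC.2 hd hD) hD⟩

lemma inj_of_retract {M Q : Type} [AddCommGroup M] [Module A M] [AddCommGroup Q] [Module A Q]
    (hQ : Module.Injective A Q) (i : M →ₗ[A] Q) (r : Q →ₗ[A] M) (h : ∀ x, r (i x) = x) :
    Module.Injective A M := by
  constructor
  intro X Y _ _ _ _ f hf g
  obtain ⟨k, hk⟩ := hQ.out f hf (i ∘ₗ g)
  exact ⟨r ∘ₗ k, fun x => by simp [hk, h]⟩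

lemma exists_inj (M : Type) [AddCommGroup M] [Module A M] :
    ∃ Q : ModuleCat.{0} A, Module.Injective A Q ∧ ∃ f : M →ₗ[A] Q, Function.Injective f := by
  refine ⟨Injective.under (ModuleCat.of A M), ?_, (Injective.ι (ModuleCat.of A M)).hom, ?_⟩
  · have h : CategoryTheory.Injective (Injective.under (ModuleCat.of A M)) := Injective.injective_under _
    exact Module.injective_module_of_injective_object A _ (inj := h)
  · exact (ModuleCat.mono_iff_injective _).1 inferInstance

/-- existence of injective hulls of simple modules -/
lemma exists_hull (hN : NakH A) (T : Type) [AddCommGroup T] [Module A T] [IsSimpleModule A T] :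
    ∃ I : ModuleCat.{0} A, Module.Finite A I ∧ Uni A I ∧ Module.Injective A I ∧
      ∃ f : T →ₗ[A] I, f ≠ 0 := by
  have hTf : Module.Finite A T := inferInstance
  obtain ⟨n, ⟨M, hMf, hMu, f, hf, hn⟩, hmax⟩ := exists_max
    (p := fun n => ∃ M : ModuleCat.{0} A, Module.Finite A M ∧ Uni A M ∧
      ∃ f : T →ₗ[A] M, f ≠ 0 ∧ len A M = n) (len A A) ⟨_, ModuleCat.of A T, hTf, (by
        intro K L
        rcases eq_bot_or_eq_top K with h | h
        · left; rw [h]; exact bot_le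
        · right; rw [h]; exact le_top), LinearMap.id, (by
          have := IsSimpleModule.nontrivial A T
          intro h
          obtain ⟨x, hx⟩ := exists_ne (0 : T)
          exact hx (LinearMap.congr_fun h x)), rfl⟩ (by
      rintro n ⟨K, hK, hu, -, -, rfl⟩
      exact hu.len_le)
  refine ⟨M, hMf, hMu, ?_, f, hf⟩
  obtain ⟨Q, hQ, i, hi⟩ := exists_inj (A := A) M
  obtain ⟨C, hC, hCmax⟩ := exists_compl (LinearMap.range i)
  have hinj : Function.Injective (C.mkQ ∘ₗ i) := by
    rw [← LinearMap.ker_eq_bot, LinearMap.ker_eq_bot']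
    intro m hm
    have h1 : i m ∈ C := by simpa using hm
    have h2 := (Submodule.disjoint_def.1 hC) (i m) (LinearMap.mem_range_self i m) h1
    exact hi (by rw [h2, map_zero])
  have hfne : (C.mkQ ∘ₗ i) ∘ₗ f ≠ 0 := by
    intro h
    apply hf
    ext x
    exact hinj (by rw [LinearMap.zero_apply, map_zero]; exact LinearMap.congr_fun h x)
  have hess : Ess ((C.mkQ ∘ₗ i) ∘ₗ f) := by
    intro K hK
    have hnd : ¬ Disjoint (LinearMap.range i) (K.comap C.mkQ) := by
      intro hd
      have hle : C ≤ K.comap C.mkQ := by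
        intro c hc
        rw [Submodule.mem_comap, (Submodule.Quotient.mk_eq_zero C).2 hc |> fun h => (show C.mkQ c = 0 from h)]
        exact K.zero_mem
      have := hCmax _ hle hd
      apply hK
      rw [eq_bot_iff]
      intro q hq
      obtain ⟨y, rfl⟩ := C.mkQ_surjective q
      have : y ∈ C := by rw [← this]; exact hq
      simpa using this
    have hne : (K.comap C.mkQ).comap i ≠ ⊥ := by
      intro h0
      apply hnd
      rw [Submodule.disjoint_def]
      rintro _ ⟨m, rfl⟩ hm
      have : m ∈ (K.comap C.mkQ).comap i := hm
      rw [h0] at this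
      rw [(Submodule.mem_bot A).1 this, map_zero]
    have := hMu.ess f _ hne
    rintro _ ⟨t, rfl⟩
    exact this (LinearMap.mem_range_self f t)
  obtain ⟨hfin, huni⟩ := ess_fin hN hfne hess
  have hle := hmax _ ⟨ModuleCat.of A (Q ⧸ C), hfin, huni, _, hfne, rfl⟩
  have hsurj := surj_of_inj_len _ hinj (by rw [hn]; exact hle)
  let e : M ≃ₗ[A] (Q ⧸ C) := LinearEquiv.ofBijective (C.mkQ ∘ₗ i) ⟨hinj, hsurj⟩
  refine inj_of_retract hQ i (e.symm.toLinearMap ∘ₗ C.mkQ) ?_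
  intro x
  show e.symm (e x) = x
  simp

end Hull

end Nak

namespace Nak

section Part3

variable {A : Type} [Ring A] [IsArtinianRing A]

lemma descend {X Y Z : Type} [AddCommGroup X] [Module A X] [AddCommGroup Y] [Module A Y]
    [AddCommGroup Z] [Module A Z] (p : X →ₗ[A] Y) (hp : Function.Surjective p) (k : X →ₗ[A] Z)
    (h : LinearMap.ker p ≤ LinearMap.ker k) : ∃ l : Y →ₗ[A] Z, ∀ x, l (p x) = k x := by
  refine ⟨(LinearMap.ker p).liftQ k h ∘ₗ (p.quotKerEquivOfSurjective hp).symm.toLinearMap, ?_⟩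
  intro x
  have : (p.quotKerEquivOfSurjective hp).symm (p x) = Submodule.Quotient.mk x := by
    rw [LinearEquiv.symm_apply_eq]; rfl
  show (LinearMap.ker p).liftQ k h ((p.quotKerEquivOfSurjective hp).symm (p x)) = k x
  rw [this, Submodule.liftQ_apply]

lemma apply_ne {X Y : Type} [AddCommGroup X] [Module A X] [AddCommGroup Y] [Module A Y]
    {f : X →ₗ[A] Y} (h : f ≠ 0) : ∃ x, f x ≠ 0 := by
  by_contra hc
  push Not at hc
  exact h (LinearMap.ext hc)

lemma comp_ne_inj {X Y Z : Type} [AddCommGroup X] [Module A X] [AddCommGroup Y] [Module A Y]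
    [AddCommGroup Z] [Module A Z] {f : X →ₗ[A] Y} (hf : f ≠ 0) {g : Y →ₗ[A] Z}
    (hg : Function.Injective g) : g ∘ₗ f ≠ 0 := by
  obtain ⟨x, hx⟩ := apply_ne hf
  intro h
  apply hx
  apply hg
  rw [map_zero]
  exact LinearMap.congr_fun h x

lemma comp_ne_surj {X Y Z : Type} [AddCommGroup X] [Module A X] [AddCommGroup Y] [Module A Y]
    [AddCommGroup Z] [Module A Z] {f : X →ₗ[A] Y} (hf : Function.Surjective f) {g : Y →ₗ[A] Z}
    (hg : g ≠ 0) : g ∘ₗ f ≠ 0 := by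
  obtain ⟨x, hx⟩ := apply_ne hg
  obtain ⟨y, rfl⟩ := hf x
  intro h
  exact hx (LinearMap.congr_fun h y)

lemma id_ne {U : Type} [AddCommGroup U] [Module A U] [IsSimpleModule A U] :
    (LinearMap.id : U →ₗ[A] U) ≠ 0 := by
  have := IsSimpleModule.nontrivial A U
  intro h
  obtain ⟨x, hx⟩ := exists_ne (0 : U)
  exact hx (LinearMap.congr_fun h x)

lemma equiv_ne {U V : Type} [AddCommGroup U] [Module A U] [IsSimpleModule A U]
    [AddCommGroup V] [Module A V] (e : U ≃ₗ[A] V) : e.toLinearMap ≠ 0 := by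
  have := comp_ne_inj (id_ne (A := A) (U := U)) (g := e.toLinearMap) e.injective
  exact this

lemma simple_uni {U : Type} [AddCommGroup U] [Module A U] [IsSimpleModule A U] : Uni A U := by
  intro K L
  rcases eq_bot_or_eq_top K with h | h
  · left; rw [h]; exact bot_le
  · right; rw [h]; exact le_top

/-- a uniserial summand mapping nontrivially to a given simple quotient -/
lemma exists_summand (hN : NakH A) {U : Type} [AddCommGroup U] [Module A U] [IsSimpleModule A U] :
    ∀ (n : ℕ) (M : Type) [AddCommGroup M] [Module A M] [Module.Finite A M],
    len A M = n → ∀ h : M →ₗ[A] U, h ≠ 0 → ∃ P : ModuleCat.{0} A, Uni A P ∧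
      ∃ (i : P →ₗ[A] M) (r : M →ₗ[A] P), (∀ x, r (i x) = x) ∧ h ∘ₗ i ≠ 0 := by
  intro n
  induction n using Nat.strong_induction_on with
  | _ n ih =>
    intro M _ _ _ hM h hh
    by_cases hi : ∀ N₁ N₂ : Submodule A M, IsCompl N₁ N₂ → N₁ = ⊥ ∨ N₂ = ⊥
    · exact ⟨ModuleCat.of A M, hN M hi, LinearMap.id, LinearMap.id, fun x => rfl, hh⟩
    push Not at hi
    obtain ⟨N₁, N₂, hc, h1, h2⟩ := hi
    have key : ∀ N₁ N₂ : Submodule A M, IsCompl N₁ N₂ → N₂ ≠ ⊥ → h ∘ₗ N₁.subtype ≠ 0 →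
        ∃ P : ModuleCat.{0} A, Uni A P ∧
      ∃ (i : P →ₗ[A] M) (r : M →ₗ[A] P), (∀ x, r (i x) = x) ∧ h ∘ₗ i ≠ 0 := by
      intro N₁ N₂ hc h2 hne
      have hlt : len A N₁ < n := by
        rw [← hM]
        apply len_lt
        rintro rfl
        apply h2
        exact eq_bot_of_isCompl_top hc.symm
      obtain ⟨P, hP, i, r, hr, hn⟩ := ih _ hlt N₁ rfl _ hne
      refine ⟨P, hP, N₁.subtype ∘ₗ i, r ∘ₗ Submodule.projectionOnto N₁ N₂ hc, ?_, hn⟩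
      intro x
      simp [hr]
    by_cases hz : h ∘ₗ N₁.subtype = 0
    · refine key N₂ N₁ hc.symm h1 ?_
      intro hz2
      apply hh
      rw [← LinearMap.ker_eq_top, eq_top_iff, ← hc.sup_eq_top, sup_le_iff]
      constructor
      · intro x hx
        exact LinearMap.congr_fun hz ⟨x, hx⟩
      · intro x hx
        exact LinearMap.congr_fun hz2 ⟨x, hx⟩
    · exact key N₁ N₂ hc h2 hz

lemma exists_proj (hN : NakH A) (U : Type) [AddCommGroup U] [Module A U] [IsSimpleModule A U] :
    ∃ P : ModuleCat.{0} A, Module.Finite A P ∧ Uni A P ∧ Module.Projective A P ∧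
      ∃ g : P →ₗ[A] U, g ≠ 0 := by
  have := IsSimpleModule.nontrivial A U
  obtain ⟨u, hu⟩ := exists_ne (0 : U)
  obtain ⟨P, hP, i, r, hr, hn⟩ := exists_summand hN (U := U) _ A rfl (LinearMap.toSpanSingleton A U u) (by
    intro h
    apply hu
    have := LinearMap.congr_fun h 1
    simpa using this)
  refine ⟨P, fin_of_inj i (Function.LeftInverse.injective hr), hP, ?_, _, hn⟩
  exact Module.Projective.of_split i r (LinearMap.ext hr)

lemma proj_lift {P U M : Type} [AddCommGroup P] [Module A P] [Module.Projective A P]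
    [AddCommGroup U] [Module A U] [IsSimpleModule A U] [AddCommGroup M] [Module A M]
    [Module.Finite A M] (hM : Uni A M) {g : P →ₗ[A] U} (hg : g ≠ 0) {h : M →ₗ[A] U} (hh : h ≠ 0) :
    ∃ q : P →ₗ[A] M, Function.Surjective q ∧ h ∘ₗ q = g := by
  obtain ⟨q, hq⟩ := Module.projective_lifting_property h g (surj_of_ne hh)
  exact ⟨q, hM.surj_of_comp hh (by rw [hq]; exact hg), hq⟩

lemma inj_lift {I T M : Type} [AddCommGroup I] [Module A I] (hI : Module.Injective A I)
    [AddCommGroup T] [Module A T] [IsSimpleModule A T] [AddCommGroup M] [Module A M]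
    [Module.Finite A M] (hM : Uni A M) {g : T →ₗ[A] I} (hg : g ≠ 0) {h : T →ₗ[A] M} (hh : h ≠ 0) :
    ∃ q : M →ₗ[A] I, Function.Injective q ∧ q ∘ₗ h = g := by
  obtain ⟨q, hq⟩ := hI.out h (inj_of_ne hh) g
  have hq' : q ∘ₗ h = g := LinearMap.ext hq
  exact ⟨q, hM.inj_of_comp (g := h) (by rw [hq']; exact hg), hq'⟩

/-- an arrow `U → T` of the quiver: a uniserial module of length two with top `U` and socle `T` -/
def Arr (A U T : Type) [Ring A] [AddCommGroup U] [Module A U] [AddCommGroup T] [Module A T] : Prop :=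
  ∃ E : ModuleCat.{0} A, Module.Finite A E ∧ Uni A E ∧ len A E = 2 ∧
    (∃ g : E →ₗ[A] U, g ≠ 0) ∧ ∃ f : T →ₗ[A] E, f ≠ 0

/-- uniserial modules of length two with the same socle are isomorphic over the socle -/
lemma ext_two (hN : NakH A) {T E₁ E₂ : Type} [AddCommGroup T] [Module A T] [IsSimpleModule A T]
    [AddCommGroup E₁] [Module A E₁] [Module.Finite A E₁] [AddCommGroup E₂] [Module A E₂]
    [Module.Finite A E₂] (h₁ : Uni A E₁) (h₂ : Uni A E₂) (hl : len A E₁ = len A E₂)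
    {f₁ : T →ₗ[A] E₁} (hf₁ : f₁ ≠ 0) {f₂ : T →ₗ[A] E₂} (hf₂ : f₂ ≠ 0) :
    ∃ e : E₁ ≃ₗ[A] E₂, ∀ t, e (f₁ t) = f₂ t := by
  obtain ⟨I, hIf, hIu, hI, ι, hι⟩ := exists_hull hN T
  obtain ⟨a₁, ha₁, hc₁⟩ := inj_lift hI h₁ hι hf₁
  obtain ⟨a₂, ha₂, hc₂⟩ := inj_lift hI h₂ hι hf₂
  have hr : LinearMap.range a₁ = LinearMap.range a₂ := by
    apply hIu.eq_of_len
    rw [len_range_inj _ ha₁, len_range_inj _ ha₂, hl]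
  refine ⟨LinearEquiv.ofInjective a₁ ha₁ ≪≫ₗ LinearEquiv.ofEq _ _ hr ≪≫ₗ
    (LinearEquiv.ofInjective a₂ ha₂).symm, ?_⟩
  intro t
  simp only [LinearEquiv.trans_apply]
  rw [LinearEquiv.symm_apply_eq]
  apply Subtype.ext
  simp only [LinearEquiv.coe_ofEq_apply, LinearEquiv.ofInjective_apply]
  exact (LinearMap.congr_fun hc₁ t).trans (LinearMap.congr_fun hc₂ t).symm

lemma Arr.left_unique (hN : NakH A) {T U V : Type} [AddCommGroup T] [Module A T] [IsSimpleModule A T]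
    [AddCommGroup U] [Module A U] [IsSimpleModule A U]
    [AddCommGroup V] [Module A V] [IsSimpleModule A V] (h₁ : Arr A U T) (h₂ : Arr A V T) :
    Nonempty (U ≃ₗ[A] V) := by
  obtain ⟨E₁, hE₁, hu₁, hl₁, ⟨g₁, hg₁⟩, f₁, hf₁⟩ := h₁
  obtain ⟨E₂, hE₂, hu₂, hl₂, ⟨g₂, hg₂⟩, f₂, hf₂⟩ := h₂
  obtain ⟨e, -⟩ := ext_two hN hu₁ hu₂ (hl₁.trans hl₂.symm) hf₁ hf₂
  exact hu₁.top_unique hg₁ (comp_ne_surj (f := e.toLinearMap) e.surjective hg₂)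

lemma iso_of_proj (hN : NakH A) {U M₁ M₂ : Type} [AddCommGroup U] [Module A U] [IsSimpleModule A U]
    [AddCommGroup M₁] [Module A M₁] [Module.Finite A M₁] [AddCommGroup M₂] [Module A M₂]
    [Module.Finite A M₂] (h₁ : Uni A M₁) (h₂ : Uni A M₂) (hl : len A M₁ = len A M₂)
    {g₁ : M₁ →ₗ[A] U} (hg₁ : g₁ ≠ 0) {g₂ : M₂ →ₗ[A] U} (hg₂ : g₂ ≠ 0) :
    Nonempty (M₁ ≃ₗ[A] M₂) := by
  obtain ⟨P, hPf, hPu, hP, g, hg⟩ := exists_proj hN U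
  obtain ⟨q₁, hq₁, -⟩ := proj_lift h₁ hg hg₁
  obtain ⟨q₂, hq₂, -⟩ := proj_lift h₂ hg hg₂
  have hk : LinearMap.ker q₁ = LinearMap.ker q₂ := by
    apply hPu.eq_of_len
    have a1 := len_ker_range q₁
    have a2 := len_ker_range q₂
    rw [LinearMap.range_eq_top.2 hq₁, len_top] at a1
    rw [LinearMap.range_eq_top.2 hq₂, len_top] at a2
    omega
  exact ⟨(q₁.quotKerEquivOfSurjective hq₁).symm ≪≫ₗ Submodule.quotEquivOfEq _ _ hk ≪≫ₗ
    q₂.quotKerEquivOfSurjective hq₂⟩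

lemma Arr.right_unique (hN : NakH A) {T T' U : Type} [AddCommGroup T] [Module A T] [IsSimpleModule A T]
    [AddCommGroup T'] [Module A T'] [IsSimpleModule A T']
    [AddCommGroup U] [Module A U] [IsSimpleModule A U] (h₁ : Arr A U T) (h₂ : Arr A U T') :
    Nonempty (T ≃ₗ[A] T') := by
  obtain ⟨E₁, hE₁, hu₁, hl₁, ⟨g₁, hg₁⟩, f₁, hf₁⟩ := h₁
  obtain ⟨E₂, hE₂, hu₂, hl₂, ⟨g₂, hg₂⟩, f₂, hf₂⟩ := h₂
  obtain ⟨e⟩ := iso_of_proj hN hu₁ hu₂ (hl₁.trans hl₂.symm) hg₁ hg₂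
  exact hu₂.soc_unique (comp_ne_inj hf₁ (g := e.toLinearMap) e.injective) hf₂

lemma Arr.congr {T T' U U' : Type} [AddCommGroup T] [Module A T]
    [AddCommGroup T'] [Module A T'] [AddCommGroup U] [Module A U] [AddCommGroup U'] [Module A U']
    (h : Arr A U T) (e : U ≃ₗ[A] U') (e' : T ≃ₗ[A] T') : Arr A U' T' := by
  obtain ⟨E₁, hE₁, hu₁, hl₁, ⟨g₁, hg₁⟩, f₁, hf₁⟩ := h
  exact ⟨E₁, hE₁, hu₁, hl₁, ⟨e.toLinearMap ∘ₗ g₁, comp_ne_inj hg₁ e.injective⟩,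
    f₁ ∘ₗ e'.symm.toLinearMap, comp_ne_surj e'.symm.surjective hf₁⟩

/-- a nonzero finite length module contains a simple module -/
lemma exists_soc {M : Type} [AddCommGroup M] [Module A M] [Module.Finite A M] (h : 0 < len A M) :
    ∃ T : Submodule A M, IsSimpleModule A T := by
  obtain ⟨K, hK⟩ := exists_sub' (A := A) (M := M) (k := 1) (by omega)
  exact ⟨K, len_eq_one.1 hK⟩

/-- existence of the arrow -/
lemma arr_exists {P U : Type} [AddCommGroup P] [Module A P] [Module.Finite A P] (hP : Uni A P)
    (hl : 2 ≤ len A P) [AddCommGroup U] [Module A U] [IsSimpleModule A U]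
    {g : P →ₗ[A] U} (hg : g ≠ 0) : ∃ T : ModuleCat.{0} A, IsSimpleModule A T ∧ Arr A U T := by
  obtain ⟨K, hK⟩ := exists_sub' (A := A) (M := P) (k := len A P - 2) (by omega)
  have h1 := len_add K
  have h2 : len A (P ⧸ K) = 2 := by omega
  obtain ⟨T, hT⟩ := exists_soc (A := A) (M := P ⧸ K) (by omega)
  have hle : K ≤ LinearMap.ker g := hP.le_ker hg (by
    rintro rfl
    rw [len_top] at hK; omega)
  refine ⟨ModuleCat.of A T, hT, ModuleCat.of A (P ⧸ K), inferInstanceAs (Module.Finite A (P ⧸ K)),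
    hP.quot K, h2, ⟨K.liftQ g hle, ?_⟩, T.subtype, ?_⟩
  · intro h
    apply hg
    ext x
    exact LinearMap.congr_fun h (K.mkQ x)
  · exact comp_ne_inj (id_ne (A := A) (U := T)) T.injective_subtype

end Part3

end Nak

namespace Nak

section Part4

variable {A : Type} [Ring A] [IsArtinianRing A]

lemma key_fg (hN : NakH A) {T : Type} [AddCommGroup T] [Module A T] [IsSimpleModule A T] :
    ∀ (n : ℕ) (Z : Type) [AddCommGroup Z] [Module A Z] [Module.Finite A Z],
    len A Z = n → ∀ f : T →ₗ[A] Z, f ≠ 0 →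
    (∀ (V : ModuleCat.{0} A), IsSimpleModule A V → ∀ h : Z →ₗ[A] V, h ∘ₗ f = 0) →
    ∃ E : ModuleCat.{0} A, Module.Finite A E ∧ Uni A E ∧ len A E = 2 ∧
      ∃ (φ : T →ₗ[A] E) (ψ : E →ₗ[A] Z), φ ≠ 0 ∧ ψ ∘ₗ φ = f := by
  intro n
  induction n using Nat.strong_induction_on with
  | _ n ih =>
    intro Z _ _ _ hZ f hf hr
    by_cases hi : ∀ N₁ N₂ : Submodule A Z, IsCompl N₁ N₂ → N₁ = ⊥ ∨ N₂ = ⊥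
    · have hu := hN Z hi
      have hl : 2 ≤ len A Z := by
        by_contra hlt
        have h1 : len A T ≤ len A Z := len_le_inj f (inj_of_ne hf)
        rw [len_simple] at h1
        have hs : IsSimpleModule A Z := len_eq_one.1 (by omega)
        exact hf (hr (ModuleCat.of A Z) hs LinearMap.id)
      obtain ⟨E, hE⟩ := exists_sub' (A := A) (M := Z) hl
      have hle : LinearMap.range f ≤ E := by
        apply hu.le_of_len
        rw [len_range_inj f (inj_of_ne hf), len_simple, hE]
        omega
      refine ⟨ModuleCat.of A E, inferInstanceAs (Module.Finite A E), hu.sub E, hE,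
        f.codRestrict E (fun t => hle (LinearMap.mem_range_self f t)), E.subtype, ?_, ?_⟩
      · intro h
        apply hf
        ext t
        exact congrArg Subtype.val (LinearMap.congr_fun h t)
      · ext t; rfl
    push Not at hi
    obtain ⟨N₁, N₂, hc, h1, h2⟩ := hi
    have key : ∀ N₁ N₂ : Submodule A Z, IsCompl N₁ N₂ → N₂ ≠ ⊥ →
        ∀ p : Z →ₗ[A] N₁, p ∘ₗ f ≠ 0 →
        ∃ E : ModuleCat.{0} A, Module.Finite A E ∧ Uni A E ∧ len A E = 2 ∧
          ∃ (φ : T →ₗ[A] E) (ψ : E →ₗ[A] N₁), φ ≠ 0 ∧ ψ ∘ₗ φ = p ∘ₗ f := by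
      intro N₁ N₂ hc h2 p hp
      have hlt : len A N₁ < n := by
        rw [← hZ]
        apply len_lt
        rintro rfl
        apply h2
        exact eq_bot_of_isCompl_top hc.symm
      exact ih _ hlt N₁ rfl _ hp (fun V hV h => by
        rw [← LinearMap.comp_assoc]; exact hr V hV (h ∘ₗ p))
    let p₁ := Submodule.projectionOnto N₁ N₂ hc
    let p₂ := Submodule.projectionOnto N₂ N₁ hc.symm
    have hsum : ∀ x, (p₁ x : Z) + (p₂ x : Z) = x := by
      intro x
      exact Submodule.projection_add_projection_eq_self hc x
    by_cases hz₁ : p₁ ∘ₗ f = 0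
    · have hz₂ : p₂ ∘ₗ f ≠ 0 := by
        intro hz₂
        apply hf
        ext t
        have := hsum (f t)
        rw [show p₁ (f t) = 0 from LinearMap.congr_fun hz₁ t,
          show p₂ (f t) = 0 from LinearMap.congr_fun hz₂ t] at this
        simpa using this.symm
      obtain ⟨E, hEf, hEu, hEl, φ, ψ, hφ, hψ⟩ := key N₂ N₁ hc.symm h1 p₂ hz₂
      refine ⟨E, hEf, hEu, hEl, φ, N₂.subtype ∘ₗ ψ, hφ, ?_⟩
      ext t
      have := hsum (f t)
      rw [show p₁ (f t) = 0 from LinearMap.congr_fun hz₁ t] at this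
      rw [← this]
      have h3 : ψ (φ t) = p₂ (f t) := LinearMap.congr_fun hψ t
      simp [h3]
    obtain ⟨E, hEf, hEu, hEl, φ, ψ, hφ, hψ⟩ := key N₁ N₂ hc h2 p₁ hz₁
    by_cases hz₂ : p₂ ∘ₗ f = 0
    · refine ⟨E, hEf, hEu, hEl, φ, N₁.subtype ∘ₗ ψ, hφ, ?_⟩
      ext t
      have := hsum (f t)
      rw [show p₂ (f t) = 0 from LinearMap.congr_fun hz₂ t] at this
      rw [← this]
      have h3 : ψ (φ t) = p₁ (f t) := LinearMap.congr_fun hψ t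
      simp [h3]
    obtain ⟨E', hEf', hEu', hEl', φ', ψ', hφ', hψ'⟩ := key N₂ N₁ hc.symm h1 p₂ hz₂
    obtain ⟨e, he⟩ := ext_two hN hEu hEu' (hEl.trans hEl'.symm) hφ hφ'
    refine ⟨E, hEf, hEu, hEl, φ, N₁.subtype ∘ₗ ψ + N₂.subtype ∘ₗ ψ' ∘ₗ e.toLinearMap, hφ, ?_⟩
    ext t
    have := hsum (f t)
    rw [← this]
    have h3 : ψ (φ t) = p₁ (f t) := LinearMap.congr_fun hψ t
    have h4 : ψ' (φ' t) = p₂ (f t) := LinearMap.congr_fun hψ' t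
    simp [h3, h4, he]

/-- in a module over a semiprimary ring, `M / J M` is semisimple -/
lemma ss_quot (Z : Type) [AddCommGroup Z] [Module A Z] :
    IsSemisimpleModule A (Z ⧸ (Ring.jacobson A • (⊤ : Submodule A Z))) := by
  have hT : Module.IsTorsionBySet A (Z ⧸ (Ring.jacobson A • (⊤ : Submodule A Z))) (Ring.jacobson A) := by
    rw [Module.isTorsionBySet_quotient_iff]
    exact fun m i hi ↦ Submodule.smul_mem_smul hi trivial
  rw [← hT.isSemisimpleModule_iff]
  infer_instance

lemma jac_fg {Z : Type} [AddCommGroup Z] [Module A Z] {z : Z}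
    (hz : z ∈ Ring.jacobson A • (⊤ : Submodule A Z)) :
    ∃ Z' : Submodule A Z, Z'.FG ∧ z ∈ Ring.jacobson A • Z' := by
  refine Submodule.smul_induction_on hz ?_ ?_
  · intro r hr n hn
    exact ⟨Submodule.span A {n}, Submodule.fg_span_singleton n,
      Submodule.smul_mem_smul hr (Submodule.mem_span_singleton_self n)⟩
  · rintro x y ⟨Z₁, h₁, hx⟩ ⟨Z₂, h₂, hy⟩
    exact ⟨Z₁ ⊔ Z₂, h₁.sup h₂, Submodule.add_mem _ (Submodule.smul_mono le_rfl le_sup_left hx)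
      (Submodule.smul_mono le_rfl le_sup_right hy)⟩

lemma key_gen (hN : NakH A) {T Z : Type} [AddCommGroup T] [Module A T] [IsSimpleModule A T]
    [AddCommGroup Z] [Module A Z] (f : T →ₗ[A] Z) (hf : f ≠ 0)
    (hr : ¬ ∃ r : Z →ₗ[A] T, r ∘ₗ f = LinearMap.id) :
    ∃ E : ModuleCat.{0} A, Module.Finite A E ∧ Uni A E ∧ len A E = 2 ∧
      ∃ (φ : T →ₗ[A] E) (ψ : E →ₗ[A] Z), φ ≠ 0 ∧ ψ ∘ₗ φ = f := by
  have hss := ss_quot (A := A) Z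
  have hzero : (Ring.jacobson A • (⊤ : Submodule A Z)).mkQ ∘ₗ f = 0 := by
    by_contra hne
    obtain ⟨r, hr'⟩ := IsSemisimpleModule.extension_property _ (inj_of_ne hne) LinearMap.id
    exact hr ⟨r ∘ₗ (Ring.jacobson A • (⊤ : Submodule A Z)).mkQ, by rw [LinearMap.comp_assoc]; exact hr'⟩
  obtain ⟨t, ht⟩ := apply_ne hf
  have hmem : f t ∈ Ring.jacobson A • (⊤ : Submodule A Z) := by
    have := LinearMap.congr_fun hzero t
    simpa using this
  obtain ⟨Z', hfg, hz⟩ := jac_fg hmem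
  have hle : LinearMap.range f ≤ Ring.jacobson A • Z' := by
    have hs : (⊤ : Submodule A T) ≤ (Ring.jacobson A • Z').comap f := by
      rcases eq_bot_or_eq_top ((Ring.jacobson A • Z').comap f) with h | h
      · exfalso
        have : t ∈ (Ring.jacobson A • Z').comap f := hz
        rw [h] at this
        rw [(Submodule.mem_bot A).1 this, map_zero] at ht
        exact ht rfl
      · exact h.ge
    rintro _ ⟨x, rfl⟩
    exact hs (show x ∈ ⊤ from trivial)
  have hfin : Module.Finite A Z' := Module.Finite.iff_fg.2 hfg
  have hle' : ∀ x, f x ∈ Z' := fun x => Submodule.smul_le_right (hle (LinearMap.mem_range_self f x))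
  obtain ⟨E, hE, hEu, hl, φ, ψ, hφ, hψ⟩ := key_fg hN _ Z' rfl (f.codRestrict Z' hle') (by
    intro h
    apply ht
    exact congrArg Subtype.val (LinearMap.congr_fun h t)) (by
    intro V hV h
    have hJ : ∀ v : V, ∀ r ∈ Ring.jacobson A, r • v = 0 := by
      intro v r hr
      have := IsSemisimpleModule.jacobson_le_annihilator A V hr
      exact Module.mem_annihilator.1 this v
    ext x
    have hx : f x ∈ Ring.jacobson A • Z' := hle (LinearMap.mem_range_self f x)
    have hker : Ring.jacobson A • Z' ≤ (LinearMap.ker h).map Z'.subtype := by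
      rw [Submodule.smul_le]
      intro r hr n hn
      refine ⟨r • ⟨n, hn⟩, ?_, rfl⟩
      show h (r • ⟨n, hn⟩) = 0
      rw [map_smul, hJ _ r hr]
    obtain ⟨y, hy, hyx⟩ := hker hx
    have : f.codRestrict Z' hle' x = y := Subtype.ext hyx.symm
    show h (f.codRestrict Z' hle' x) = 0
    rw [this]; exact hy)
  refine ⟨E, hE, hEu, hl, φ, Z'.subtype ∘ₗ ψ, hφ, ?_⟩
  rw [LinearMap.comp_assoc, hψ]
  ext x; rfl

end Part4

end Nak

namespace Nak

section Part5

variable {A : Type} [Ring A] [IsArtinianRing A]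

lemma indec_simple (T : ModuleCat.{0} A) (hT : IsSimpleModule A T) : ArtinAlg.Indec A T := by
  refine ⟨IsSimpleModule.nontrivial A T, ?_⟩
  intro N₁ N₂ hc
  rcases eq_bot_or_eq_top N₁ with h | h
  · exact Or.inl h
  · right; subst h; exact eq_bot_of_isCompl_top hc.symm

lemma tau_of_arr (hN : NakH A) (T U : ModuleCat.{0} A) (hT : IsSimpleModule A T)
    (hU : IsSimpleModule A U) (h : Arr A U T) : ArtinAlg.IsTauOf A T U := by
  obtain ⟨E, hEf, hEu, hEl, ⟨g, hg⟩, f, hf⟩ := h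
  have hgs := surj_of_ne hg
  have hfi := inj_of_ne hf
  have hkr : LinearMap.range f = LinearMap.ker g := by
    apply hEu.eq_of_len
    have := len_ker_simple hg
    rw [len_range_inj f hfi, len_simple]
    omega
  have hgf : ∀ t, g (f t) = 0 := by
    intro t
    have : f t ∈ LinearMap.ker g := hkr ▸ LinearMap.mem_range_self f t
    exact this
  have w : ModuleCat.ofHom f ≫ ModuleCat.ofHom g = 0 := by
    ext t; exact hgf t
  refine ⟨E, ModuleCat.ofHom f, ModuleCat.ofHom g, (ModuleCat.mono_iff_injective _).2 hfi,
    (ModuleCat.epi_iff_surjective _).2 hgs, ⟨w, ?_⟩, ?_, indec_simple T hT, indec_simple U hU, ?_⟩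
  · rw [ShortComplex.moduleCat_exact_iff]
    intro x hx
    have : x ∈ LinearMap.ker g := hx
    rw [← hkr] at this
    exact this
  · rintro ⟨s, hs⟩
    have hs' : ∀ u, g (s.hom u) = u := fun u => by
      have := congrArg (fun k => k.hom u) hs
      exact this
    have hsne : s.hom ≠ 0 := by
      intro h0
      have := IsSimpleModule.nontrivial A U
      obtain ⟨x, hx⟩ := exists_ne (0 : U)
      apply hx
      rw [← hs' x, h0]; simp
    have hr : LinearMap.range s.hom = LinearMap.ker g := by
      rw [← hkr]
      apply hEu.eq_of_len
      rw [len_range_inj f hfi, len_range_inj _ (inj_of_ne hsne), len_simple, len_simple]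
    obtain ⟨u, hu⟩ := apply_ne hsne
    have : s.hom u ∈ LinearMap.ker g := hr ▸ LinearMap.mem_range_self _ u
    have h0 : g (s.hom u) = 0 := this
    rw [hs'] at h0
    rw [h0, map_zero] at hu
    exact hu rfl
  · intro X h hns
    let Z : Submodule A (X × E) := LinearMap.ker (h.hom ∘ₗ LinearMap.fst A X E - g ∘ₗ LinearMap.snd A X E)
    have hZ : ∀ z : Z, h.hom z.1.1 = g z.1.2 := fun z => by
      have := z.2
      exact sub_eq_zero.1 this
    let j : T →ₗ[A] Z := (LinearMap.inr A X E ∘ₗ f).codRestrict Z (fun t => by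
      show h.hom 0 - g (f t) = 0
      rw [hgf, map_zero, sub_zero])
    have hj1 : ∀ t, (j t).1.1 = 0 := fun t => rfl
    have hj2 : ∀ t, (j t).1.2 = f t := fun t => rfl
    have hjne : j ≠ 0 := by
      obtain ⟨t, ht⟩ := apply_ne hf
      intro h0
      apply ht
      rw [← hj2, h0]; rfl
    let p : Z →ₗ[A] X := LinearMap.fst A X E ∘ₗ Z.subtype
    let q : Z →ₗ[A] E := LinearMap.snd A X E ∘ₗ Z.subtype
    have hpq : ∀ z, h.hom (p z) = g (q z) := hZ
    have hp : Function.Surjective p := by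
      intro x
      obtain ⟨e, he⟩ := hgs (h.hom x)
      exact ⟨⟨(x, e), by show h.hom x - g e = 0; rw [he, sub_self]⟩, rfl⟩
    have hkp : ∀ z, p z = 0 → ∃ t, j t = z := by
      intro z hz
      have h1 : q z ∈ LinearMap.ker g := by
        show g (q z) = 0
        rw [← hpq, hz, map_zero]
      rw [← hkr] at h1
      obtain ⟨t, ht⟩ := h1
      refine ⟨t, Subtype.ext (Prod.ext ?_ ?_)⟩
      · exact hz.symm
      · exact ht
    by_cases hret : ∃ r : Z →ₗ[A] T, r ∘ₗ j = LinearMap.id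
    · obtain ⟨r, hr⟩ := hret
      obtain ⟨l, hl⟩ := descend p hp (q - f ∘ₗ r) (by
        intro z hz
        obtain ⟨t, rfl⟩ := hkp z hz
        show q (j t) - f (r (j t)) = 0
        have : r (j t) = t := LinearMap.congr_fun hr t
        rw [this]
        exact sub_self _)
      refine ⟨ModuleCat.ofHom l, ?_⟩
      ext x
      obtain ⟨z, rfl⟩ := hp x
      show g (l (p z)) = h.hom (p z)
      rw [hl, hpq]
      show g (q z - f (r z)) = _
      rw [map_sub, hgf, sub_zero]
    · exfalso
      obtain ⟨E', hEf', hEu', hEl', φ, ψ, hφ, hψ⟩ := key_gen hN j hjne hret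
      have hψ' : ∀ t, ψ (φ t) = j t := LinearMap.congr_fun hψ
      have hqψ : (q ∘ₗ ψ) ∘ₗ φ = f := by
        ext t
        show q (ψ (φ t)) = f t
        rw [hψ']; rfl
      have hinj : Function.Injective (q ∘ₗ ψ) := hEu'.inj_of_comp (g := φ) (by rw [hqψ]; exact hf)
      have hsur : Function.Surjective (q ∘ₗ ψ) := surj_of_inj_len _ hinj (by omega)
      let θ : E' ≃ₗ[A] E := LinearEquiv.ofBijective _ ⟨hinj, hsur⟩
      have hθ : ∀ x, θ x = q (ψ x) := fun x => rfl
      have hθf : ∀ t, θ.symm (f t) = φ t := by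
        intro t
        rw [LinearEquiv.symm_apply_eq, hθ]
        exact (LinearMap.congr_fun hqψ t).symm
      obtain ⟨s, hs⟩ := descend g hgs (p ∘ₗ ψ ∘ₗ θ.symm.toLinearMap) (by
        rw [← hkr]
        rintro _ ⟨t, rfl⟩
        show p (ψ (θ.symm (f t))) = 0
        rw [hθf, hψ']; rfl)
      apply hns
      refine ⟨ModuleCat.ofHom s, ?_⟩
      ext u
      obtain ⟨e, rfl⟩ := hgs u
      show h.hom (s (g e)) = g e
      rw [hs]
      show h.hom (p (ψ (θ.symm e))) = g e
      rw [hpq, ← hθ, LinearEquiv.apply_symm_apply]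

lemma arr_of_tau (T U : ModuleCat.{0} A) (hT : IsSimpleModule A T)
    (hU : IsSimpleModule A U) (h : ArtinAlg.IsTauOf A T U) : Arr A U T := by
  obtain ⟨E, f, g, hf, hg, ⟨w, hex⟩, hns, -, -, -⟩ := h
  rw [ModuleCat.mono_iff_injective] at hf
  rw [ModuleCat.epi_iff_surjective] at hg
  rw [ShortComplex.moduleCat_exact_iff] at hex
  have hkr : LinearMap.range f.hom = LinearMap.ker g.hom := by
    apply le_antisymm
    · rintro _ ⟨t, rfl⟩
      exact congrArg (fun k => k.hom t) w
    · intro x hx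
      exact hex x hx
  have hff : Module.Finite A (LinearMap.ker g.hom) := by
    rw [← hkr]; infer_instance
  have hqf : Module.Finite A (E ⧸ LinearMap.ker g.hom) :=
    Module.Finite.equiv (g.hom.quotKerEquivOfSurjective hg).symm
  have hE : Module.Finite A E := Module.Finite.of_submodule_quotient (LinearMap.ker g.hom)
  have hne : ∀ {V W : ModuleCat.{0} A} (_ : IsSimpleModule A V) (k : V →ₗ[A] W), Function.Injective k → k ≠ 0 := by
    intro V W hV k hk
    exact comp_ne_inj (id_ne (A := A) (U := V)) hk
  have hgne : g.hom ≠ 0 := by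
    have := comp_ne_surj (f := g.hom) hg (id_ne (A := A) (U := U))
    exact this
  have hfne : f.hom ≠ 0 := hne hT _ hf
  have hl1 : len A (LinearMap.ker g.hom) = 1 := by
    rw [← hkr, len_range_inj _ hf, len_simple]
  have hl : len A E = 2 := by
    have := len_ker_simple hgne
    omega
  refine ⟨E, hE, ?_, hl, ⟨g.hom, hgne⟩, f.hom, hfne⟩
  have key : ∀ K : Submodule A E, K = ⊥ ∨ K = ⊤ ∨ K = LinearMap.ker g.hom := by
    intro K
    by_contra hc
    push Not at hc
    obtain ⟨h1, h2, h3⟩ := hc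
    have hK := len_lt h2
    rw [Ne, ← len_eq_zero_sub] at h1
    have hK1 : len A K = 1 := by omega
    have hKs : IsSimpleModule A K := len_eq_one.1 hK1
    have hgK : g.hom ∘ₗ K.subtype ≠ 0 := by
      intro h0
      apply h3
      apply eq_of_le_len
      · intro x hx
        exact LinearMap.congr_fun h0 ⟨x, hx⟩
      · omega
    let e : K ≃ₗ[A] U := LinearEquiv.ofBijective _ ⟨inj_of_ne hgK, surj_of_ne hgK⟩
    apply hns
    refine ⟨ModuleCat.ofHom (K.subtype ∘ₗ e.symm.toLinearMap), ?_⟩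
    ext u
    exact e.apply_symm_apply u
  intro K L
  rcases key K with h | h | h
  · left; rw [h]; exact bot_le
  · right; rw [h]; exact le_top
  rcases key L with h' | h' | h'
  · right; rw [h']; exact bot_le
  · left; rw [h']; exact le_top
  · left; rw [h, h']

/-- finitely many simple quotients -/
lemma simples_list : ∀ (n : ℕ) (M : Type) [AddCommGroup M] [Module A M] [Module.Finite A M],
    len A M = n → ∃ l : List (ModuleCat.{0} A), ∀ U : ModuleCat.{0} A, IsSimpleModule A U →
      ∀ h : M →ₗ[A] U, h ≠ 0 → ∃ V ∈ l, Nonempty (U ≃ₗ[A] V) := by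
  intro n
  induction n with
  | zero =>
    intro M _ _ _ hM
    refine ⟨[], fun U hU h hh => ?_⟩
    exfalso
    rw [len_eq_zero] at hM
    apply hh
    ext x
    rw [Subsingleton.elim x 0, map_zero, map_zero]
  | succ n ih =>
    intro M _ _ _ hM
    obtain ⟨T, hT⟩ := exists_soc (A := A) (M := M) (by omega)
    have h1 := len_add T
    rw [len_simple (N := T)] at h1
    obtain ⟨l, hl⟩ := ih (M ⧸ T) (by omega)
    refine ⟨ModuleCat.of A T :: l, fun U hU h hh => ?_⟩
    by_cases h0 : h ∘ₗ T.subtype = 0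
    · obtain ⟨V, hV, e⟩ := hl U hU (T.liftQ h (fun x hx => LinearMap.congr_fun h0 ⟨x, hx⟩)) (by
        intro hz
        apply hh
        ext x
        exact LinearMap.congr_fun hz (T.mkQ x))
      exact ⟨V, List.mem_cons_of_mem _ hV, e⟩
    · refine ⟨ModuleCat.of A T, List.mem_cons_self, ⟨?_⟩⟩
      exact (LinearEquiv.ofBijective _ ⟨inj_of_ne h0, surj_of_ne h0⟩ : T ≃ₗ[A] U).symm

lemma simples_fin : ∃ l : List (ModuleCat.{0} A), ∀ U : ModuleCat.{0} A, IsSimpleModule A U →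
      ∃ V ∈ l, Nonempty (U ≃ₗ[A] V) := by
  obtain ⟨l, hl⟩ := simples_list (A := A) _ A rfl
  refine ⟨l, fun U hU => ?_⟩
  have := IsSimpleModule.nontrivial A U
  obtain ⟨u, hu⟩ := exists_ne (0 : U)
  refine hl U hU (LinearMap.toSpanSingleton A U u) ?_
  intro h
  apply hu
  have := LinearMap.congr_fun h 1
  simpa using this

end Part5

end Nak

namespace Nak

/-- a cyclic sequence of simple modules, with their projective covers -/
structure Cyc (A : Type) [Ring A] where
  n : ℕ
  hn : 0 < n
  s : ℤ → ModuleCat.{0} A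
  simple : ∀ k, IsSimpleModule A (s k)
  per : ∀ k, s (k + n) = s k
  arr : ∀ k, Arr A (s k) (s (k + 1))
  P : ℤ → ModuleCat.{0} A
  fin : ∀ k, Module.Finite A (P k)
  uni : ∀ k, Uni A (P k)
  proj : ∀ k, Module.Projective A (P k)
  top : ∀ k, ∃ g : P k →ₗ[A] s k, g ≠ 0

section Part6

variable {A : Type} [Ring A] [IsArtinianRing A]

/-- isomorphism of simple modules -/
def isoSetoid (A : Type) [Ring A] : Setoid {U : ModuleCat.{0} A // IsSimpleModule A U} where
  r U V := Nonempty (U.1 ≃ₗ[A] V.1)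
  iseqv := ⟨fun U => ⟨LinearEquiv.refl A U.1⟩, fun ⟨e⟩ => ⟨e.symm⟩, fun ⟨e⟩ ⟨f⟩ => ⟨e.trans f⟩⟩

lemma exists_cyc (hN : NakH A)
    (hnp : ∀ U : ModuleCat.{0} A, IsSimpleModule A U → ¬ Module.Projective A U)
    (S : ModuleCat.{0} A) (hS : IsSimpleModule A S) :
    ∃ c : Cyc A, Nonempty (S ≃ₗ[A] c.s 0) := by
  let _ := isoSetoid A
  let Q := Quotient (isoSetoid A)
  have hiso : ∀ q q' : Q, Nonempty (q.out.1 ≃ₗ[A] q'.out.1) → q = q' := by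
    intro q q' h
    rw [← Quotient.out_eq q, ← Quotient.out_eq q']
    exact Quotient.sound h
  have hQ : Finite Q := by
    obtain ⟨l, hl⟩ := simples_fin (A := A)
    have : ∀ q : Q, ∃ i : Fin l.length, Nonempty (q.out.1 ≃ₗ[A] l.get i) := by
      intro q
      obtain ⟨V, hV, e⟩ := hl q.out.1 q.out.2
      obtain ⟨i, hi⟩ := List.get_of_mem hV
      exact ⟨i, by rw [hi]; exact e⟩
    choose φ hφ using this
    refine Finite.of_injective φ ?_
    intro q q' h
    obtain ⟨e⟩ := hφ q
    obtain ⟨e'⟩ := hφ q'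
    rw [← h] at e'
    exact hiso _ _ ⟨e.trans e'.symm⟩
  have hP : ∀ U : ModuleCat.{0} A, IsSimpleModule A U → ∃ P : ModuleCat.{0} A, Module.Finite A P ∧ Uni A P ∧ Module.Projective A P ∧
      ∃ g : P →ₗ[A] U, g ≠ 0 := fun U hU => exists_proj hN U
  have harr : ∀ q : Q, ∃ q' : Q, Arr A q.out.1 q'.out.1 := by
    intro q
    have hq := q.out.2
    obtain ⟨P, hPf, hPu, hPp, g, hg⟩ := hP _ hq
    have hl : 2 ≤ len A P := by
      by_contra hlt
      have h1 := len_ker_simple hg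
      have hs : IsSimpleModule A P := len_eq_one.1 (by omega)
      exact hnp P hs hPp
    obtain ⟨T, hT, ha⟩ := arr_exists hPu hl hg
    refine ⟨Quotient.mk _ ⟨T, hT⟩, ?_⟩
    have : Nonempty ((Quotient.mk (isoSetoid A) ⟨T, hT⟩).out.1 ≃ₗ[A] T) :=
      Quotient.mk_out (s := isoSetoid A) ⟨T, hT⟩
    obtain ⟨e⟩ := this
    exact ha.congr (LinearEquiv.refl A _) e.symm
  choose σ hσ using harr
  have hinj : Function.Injective σ := by
    intro q q' h
    have := q.out.2
    have := q'.out.2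
    have := (σ q).out.2
    have h1 := hσ q
    have h2 := hσ q'
    rw [← h] at h2
    exact hiso _ _ (h1.left_unique hN h2)
  let π : Equiv.Perm Q := Equiv.ofBijective σ (Finite.injective_iff_bijective.1 hinj)
  have hπ : ∀ q, π q = σ q := fun q => rfl
  let q0 : Q := Quotient.mk _ ⟨S, hS⟩
  let s : ℤ → ModuleCat.{0} A := fun k => ((π ^ k) q0).out.1
  have hs : ∀ k, IsSimpleModule A (s k) := fun k => ((π ^ k) q0).out.2
  have hper : ∀ k : ℤ, s (k + (orderOf π : ℕ)) = s k := by
    intro k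
    show ((π ^ (k + (orderOf π : ℕ))) q0).out.1 = ((π ^ k) q0).out.1
    rw [zpow_add, zpow_natCast, pow_orderOf_eq_one, mul_one]
  have harr : ∀ k, Arr A (s k) (s (k + 1)) := by
    intro k
    have h1 := hσ ((π ^ k) q0)
    show Arr A ((π ^ k) q0).out.1 ((π ^ (k + 1)) q0).out.1
    rw [zpow_add_one, (Commute.refl π).zpow_left k |>.eq]
    exact h1
  choose P h1 h2 h3 h4 using fun k => hP (s k) (hs k)
  refine ⟨⟨orderOf π, orderOf_pos π, s, hs, hper, harr, P, h1, h2, h3, h4⟩, ?_⟩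
  have : Nonempty ((Quotient.mk (isoSetoid A) ⟨S, hS⟩).out.1 ≃ₗ[A] S) :=
    Quotient.mk_out (s := isoSetoid A) ⟨S, hS⟩
  obtain ⟨e⟩ := this
  refine ⟨e.symm⟩

namespace Cyc

variable (c : Cyc A)

instance (k : ℤ) : IsSimpleModule A (c.s k) := c.simple k
instance (k : ℤ) : Module.Finite A (c.P k) := c.fin k
instance (k : ℤ) : Module.Projective A (c.P k) := c.proj k

/-- the position one past the socle of `P k` -/
def f (k : ℤ) : ℤ := k + len A (c.P k)

/-- `M` is uniserial with composition factors `s i, …, s (j-1)` from the top -/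
def Seg (i j : ℤ) (M : Type) [AddCommGroup M] [Module A M] : Prop :=
  Module.Finite A M ∧ Uni A M ∧ (len A M : ℤ) = j - i ∧ (i < j → ∃ g : M →ₗ[A] c.s i, g ≠ 0)

variable {c}
variable {M N : Type} [AddCommGroup M] [Module A M] [AddCommGroup N] [Module A N]

lemma seg_congr {i j : ℤ} (h : c.Seg i j M) (e : M ≃ₗ[A] N) : c.Seg i j N := by
  obtain ⟨h1, h2, h3, h4⟩ := h
  refine ⟨Module.Finite.equiv e, h2.of_surj e.toLinearMap e.surjective, by rw [← len_congr e, h3], ?_⟩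
  intro hij
  obtain ⟨g, hg⟩ := h4 hij
  exact ⟨g ∘ₗ e.symm.toLinearMap, comp_ne_surj e.symm.surjective hg⟩

lemma seg_le' {i j : ℤ} (h : c.Seg i j M) : i ≤ j := by
  have := h.2.2.1
  omega

lemma seg_iso (hN : NakH A) {i j : ℤ} (h : c.Seg i j M) (h' : c.Seg i j N) : Nonempty (M ≃ₗ[A] N) := by
  rcases (seg_le' h).eq_or_lt with hij | hij
  · have hM := h.1
    have hN' := h'.1
    have a1 : len A M = 0 := by have := h.2.2.1; omega
    have a2 : len A N = 0 := by have := h'.2.2.1; omega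
    rw [len_eq_zero] at a1 a2
    exact ⟨LinearEquiv.ofSubsingleton M N⟩
  · obtain ⟨g, hg⟩ := h.2.2.2 hij
    obtain ⟨g', hg'⟩ := h'.2.2.2 hij
    have := h.1
    have := h'.1
    refine iso_of_proj hN h.2.1 h'.2.1 ?_ hg hg'
    have := h.2.2.1
    have := h'.2.2.1
    omega

lemma seg_P (i : ℤ) : c.Seg i (c.f i) (c.P i) :=
  ⟨c.fin i, c.uni i, by unfold f; omega, fun _ => c.top i⟩

lemma lt_f (i : ℤ) : i < c.f i := by
  obtain ⟨g, hg⟩ := c.top i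
  have := len_ker_simple hg
  unfold f; omega

lemma seg_le {i j : ℤ} (h : c.Seg i j M) : j ≤ c.f i := by
  rcases (seg_le' h).eq_or_lt with hij | hij
  · have := c.lt_f i
    omega
  · obtain ⟨g, hg⟩ := h.2.2.2 hij
    obtain ⟨g', hg'⟩ := c.top i
    have := h.1
    obtain ⟨q, hq, -⟩ := proj_lift h.2.1 hg' hg
    have h1 := len_le_surj q hq
    have h2 := h.2.2.1
    unfold f; omega

lemma seg_proj (hN : NakH A) {i j : ℤ} (hij : i < j) (h : c.Seg i j M) :
    Module.Projective A M ↔ j = c.f i := by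
  constructor
  · intro hp
    obtain ⟨g, hg⟩ := h.2.2.2 hij
    obtain ⟨g', hg'⟩ := c.top i
    have := h.1
    obtain ⟨q, hq, -⟩ := proj_lift (c.uni i) hg hg'
    have h1 := len_le_surj q hq
    have h2 := h.2.2.1
    have h3 := seg_le h
    unfold f at *; omega
  · rintro rfl
    obtain ⟨e⟩ := seg_iso hN h (seg_P i)
    exact Module.Projective.of_equiv e.symm

lemma seg_quot {i j k : ℤ} (h : c.Seg i j M) {K : Submodule A M} (hk : (len A K : ℤ) = j - k) :
    c.Seg i k (M ⧸ K) := by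
  have := h.1
  refine ⟨inferInstance, h.2.1.quot K, ?_, ?_⟩
  · have h1 := len_add K
    have h2 := h.2.2.1
    omega
  · intro hik
    obtain ⟨g, hg⟩ := h.2.2.2 (by omega)
    have hle : K ≤ LinearMap.ker g := h.2.1.le_ker hg (by
      rintro rfl
      rw [len_top] at hk
      have := h.2.2.1
      omega)
    refine ⟨K.liftQ g hle, ?_⟩
    intro h
    apply hg
    ext x
    exact LinearMap.congr_fun h (K.mkQ x)

end Cyc

/-- the top of the radical is the target of an arrow -/
lemma arr_of_top {M U V : Type} [AddCommGroup M] [Module A M] [Module.Finite A M] (hM : Uni A M)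
    [AddCommGroup U] [Module A U] [IsSimpleModule A U] [AddCommGroup V] [Module A V] [IsSimpleModule A V]
    {g : M →ₗ[A] U} (hg : g ≠ 0) {K : Submodule A M} (hK : len A K + 1 = len A M)
    {h : K →ₗ[A] V} (hh : h ≠ 0) : Arr A U V := by
  let L : Submodule A M := (LinearMap.ker h).map K.subtype
  have hL : len A L = len A (LinearMap.ker h) :=
    (len_congr (Submodule.equivMapOfInjective _ K.injective_subtype _)).symm
  have h1 := len_ker_simple hh
  have h2 := len_add L
  have hle : L ≤ LinearMap.ker g := hM.le_ker hg (by
    intro ht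
    rw [ht, len_top] at hL
    omega)
  obtain ⟨l, hl⟩ := descend h (surj_of_ne hh) (L.mkQ ∘ₗ K.subtype) (by
    intro x hx
    show L.mkQ (K.subtype x) = 0
    rw [← LinearMap.mem_ker, Submodule.ker_mkQ]
    exact ⟨x, hx, rfl⟩)
  refine ⟨ModuleCat.of A (M ⧸ L), inferInstanceAs (Module.Finite A (M ⧸ L)), hM.quot L, ?_,
    ⟨L.liftQ g hle, ?_⟩, l, ?_⟩
  · show len A (M ⧸ L) = 2
    omega
  · intro h
    apply hg
    ext x
    exact LinearMap.congr_fun h (L.mkQ x)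
  · obtain ⟨x, hx⟩ := apply_ne hh
    intro h0
    have : L.mkQ (K.subtype x) = 0 := by
      rw [← LinearMap.comp_apply, ← hl, h0]; rfl
    rw [← LinearMap.mem_ker, Submodule.ker_mkQ] at this
    obtain ⟨y, hy, hyx⟩ := this
    have : y = x := Subtype.ext hyx
    rw [this] at hy
    exact hx hy

namespace Cyc

variable {c : Cyc A}
variable {M N : Type} [AddCommGroup M] [Module A M] [AddCommGroup N] [Module A N]

lemma seg_rad (hN : NakH A) {i j : ℤ} (h : c.Seg i j M) {K : Submodule A M}
    (hk : (len A K : ℤ) = j - (i + 1)) : c.Seg (i + 1) j K := by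
  have := h.1
  refine ⟨inferInstance, h.2.1.sub K, hk, ?_⟩
  intro hij
  obtain ⟨g, hg⟩ := h.2.2.2 (by omega)
  have hnt : Nontrivial K := nontrivial_of_len (A := A) (by omega)
  obtain ⟨L, hL⟩ := exists_top (A := A) (M := K)
  have ha : Arr A (c.s i) (K ⧸ L) := arr_of_top h.2.1 hg (by have := h.2.2.1; omega) (mkQ_ne (K := L))
  obtain ⟨e⟩ := ha.right_unique hN (c.arr i)
  exact ⟨e.toLinearMap ∘ₗ L.mkQ, comp_ne_inj mkQ_ne e.injective⟩

lemma seg_sub_aux (hN : NakH A) {i j : ℤ} (h : c.Seg i j M) (d : ℕ) :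
    ∀ {K : Submodule A M}, (len A K : ℤ) = j - (i + d) → c.Seg (i + d) j K := by
  have := h.1
  induction d with
  | zero =>
    intro K hk
    have : K = ⊤ := eq_top_of_len (by have := h.2.2.1; omega)
    subst this
    have := seg_congr h (Submodule.topEquiv (R := A) (M := M)).symm
    simpa using this
  | succ d ih =>
    intro K hk
    obtain ⟨L, hL⟩ := exists_sub' (A := A) (M := M) (k := len A K + 1) (by
      have := h.2.2.1; push_cast at hk; omega)
    have h1 := ih (K := L) (by push_cast at hk ⊢; omega)
    have hle : K ≤ L := h.2.1.le_of_len (by omega)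
    let e : K.comap L.subtype ≃ₗ[A] K := Submodule.comapSubtypeEquivOfLe hle
    have h2 := seg_rad hN h1 (K := K.comap L.subtype) (by
      rw [len_congr e]; push_cast at hk; omega)
    have h3 := seg_congr h2 e
    push_cast
    rw [← add_assoc]
    exact h3

lemma seg_sub (hN : NakH A) {i j k : ℤ} (h : c.Seg i j M) {K : Submodule A M}
    (hk : (len A K : ℤ) = j - k) : c.Seg k j K := by
  have := h.1
  have h1 := len_add K
  have h2 := h.2.2.1
  obtain ⟨d, hd⟩ := Int.eq_ofNat_of_zero_le (show 0 ≤ k - i by omega)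
  have := seg_sub_aux hN h d (K := K) (by omega)
  rwa [show i + (d : ℤ) = k by omega] at this

lemma seg_exists {i j : ℤ} (h1 : i ≤ j) (h2 : j ≤ c.f i) : ∃ M : ModuleCat.{0} A, c.Seg i j M := by
  obtain ⟨d, hd⟩ := Int.eq_ofNat_of_zero_le (show 0 ≤ c.f i - j by omega)
  obtain ⟨K, hK⟩ := exists_sub' (A := A) (M := c.P i) (k := d) (by unfold f at *; omega)
  exact ⟨ModuleCat.of A (c.P i ⧸ K), seg_quot (seg_P i) (by omega)⟩

lemma seg_s (i : ℤ) : c.Seg i (i + 1) (c.s i) := by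
  refine ⟨inferInstance, simple_uni, by rw [len_simple]; push_cast; omega, fun _ => ⟨LinearMap.id, id_ne⟩⟩

lemma seg_soc (hN : NakH A) {i j : ℤ} (h : c.Seg i j M) (hij : i < j) :
    ∃ f : c.s (j - 1) →ₗ[A] M, f ≠ 0 := by
  have := h.1
  obtain ⟨K, hK⟩ := exists_sub' (A := A) (M := M) (k := 1) (by have := h.2.2.1; omega)
  have h1 := seg_sub hN h (K := K) (k := j - 1) (by omega)
  have h2 := c.seg_s (j - 1)
  rw [show j - 1 + 1 = j by omega] at h2
  obtain ⟨e⟩ := seg_iso hN h2 h1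
  exact ⟨K.subtype ∘ₗ e.toLinearMap, comp_ne_inj (equiv_ne e) K.injective_subtype⟩

lemma f_mono1 (hN : NakH A) (i : ℤ) : c.f i ≤ c.f (i + 1) := by
  have := c.lt_f i
  obtain ⟨K, hK⟩ := exists_sub' (A := A) (M := c.P i) (k := len A (c.P i) - 1) (by omega)
  exact seg_le (seg_sub hN (seg_P i) (K := K) (k := i + 1) (by unfold f at *; omega))

lemma f_mono (hN : NakH A) : Monotone c.f := monotone_int_of_le_succ (f_mono1 hN)

lemma f_per (i : ℤ) : c.f (i + c.n) = c.f i + c.n := by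
  have key : ∀ i j, c.s i = c.s j → len A (c.P i) ≤ len A (c.P j) := by
    intro i j hij
    obtain ⟨g, hg⟩ := c.top i
    obtain ⟨g', hg'⟩ := c.top j
    have : ∃ g'' : c.P j →ₗ[A] c.s i, g'' ≠ 0 := by rw [hij]; exact ⟨g', hg'⟩
    obtain ⟨g'', hg''⟩ := this
    obtain ⟨q, hq, -⟩ := proj_lift (c.uni i) hg'' hg
    exact len_le_surj q hq
  have h1 := key _ _ (c.per i)
  have h2 := key _ _ (c.per i).symm
  unfold f; omega

lemma seg_left_aux (hN : NakH A) (j : ℤ) : ∀ (d : ℕ) (M : Type) [AddCommGroup M] [Module A M]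
    [Module.Finite A M], Uni A M → len A M = d + 1 → ∀ φ : c.s (j - 1) →ₗ[A] M, φ ≠ 0 →
    c.Seg (j - (d + 1)) j M := by
  intro d
  induction d with
  | zero =>
    intro M _ _ _ hM hl φ hφ
    have hs : IsSimpleModule A M := len_eq_one.1 hl
    have e : c.s (j - 1) ≃ₗ[A] M := LinearEquiv.ofBijective φ ⟨inj_of_ne hφ, surj_of_ne hφ⟩
    have := seg_congr (c.seg_s (j - 1)) e
    simpa using this
  | succ d ih =>
    intro M _ _ _ hM hl φ hφ
    have hnt : Nontrivial M := nontrivial_of_len (A := A) (by omega)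
    obtain ⟨K, hK⟩ := exists_top (A := A) (M := M)
    have hlK := len_add K
    rw [len_simple (N := M ⧸ K)] at hlK
    have hle : LinearMap.range φ ≤ K := hM.ess φ K (by
      rw [Ne, ← len_eq_zero_sub]; omega)
    have h1 := ih K (hM.sub K) (by omega) (φ.codRestrict K fun x => hle (LinearMap.mem_range_self φ x)) (by
      intro h0
      apply hφ
      ext x
      exact congrArg Subtype.val (LinearMap.congr_fun h0 x))
    obtain ⟨g, hg⟩ := h1.2.2.2 (by omega)
    have ha : Arr A (M ⧸ K) _ := arr_of_top hM (mkQ_ne (K := K)) (by omega) hg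
    have hb := c.arr (j - (d + 1) - 1)
    rw [show j - ((d : ℤ) + 1) - 1 + 1 = j - (d + 1) by omega] at hb
    obtain ⟨e⟩ := ha.left_unique hN hb
    refine ⟨inferInstance, hM, by rw [hl]; push_cast; omega, fun _ => ?_⟩
    rw [show j - (((d + 1 : ℕ) : ℤ) + 1) = j - ((d : ℤ) + 1) - 1 by push_cast; omega]
    exact ⟨e.toLinearMap ∘ₗ K.mkQ, comp_ne_inj mkQ_ne e.injective⟩

lemma seg_left (hN : NakH A) {j : ℤ} [Module.Finite A M] (hM : Uni A M)
    {φ : c.s (j - 1) →ₗ[A] M} (hφ : φ ≠ 0) : c.Seg (j - len A M) j M := by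
  have h1 := len_le_inj φ (inj_of_ne hφ)
  rw [len_simple] at h1
  obtain ⟨d, hd⟩ : ∃ d, len A M = d + 1 := ⟨len A M - 1, by omega⟩
  have := seg_left_aux hN j d M hM hd φ hφ
  rw [hd]; push_cast; exact this

/-- criterion for injectivity -/
lemma seg_inj (hN : NakH A) {i j : ℤ} (hij : i < j) (h : c.Seg i j M) :
    Module.Injective A M ↔ c.f (i - 1) < j := by
  have hfin := h.1
  have hl := h.2.2.1
  constructor
  · intro hI
    by_contra hc
    push Not at hc
    obtain ⟨N, hNs⟩ := c.seg_exists (i := i - 1) (j := j) (by omega) hc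
    have hNf := hNs.1
    have hNl := hNs.2.2.1
    obtain ⟨φ, hφ⟩ := seg_soc hN h hij
    obtain ⟨φ', hφ'⟩ := seg_soc hN hNs (by omega)
    obtain ⟨q, hq, -⟩ := inj_lift hI hNs.2.1 hφ hφ'
    have := len_le_inj q hq
    omega
  · intro hf
    obtain ⟨I, hIf, hIu, hI, ι, hι⟩ := exists_hull hN (c.s (j - 1))
    obtain ⟨φ, hφ⟩ := seg_soc hN h hij
    obtain ⟨q, hq, -⟩ := inj_lift hI h.2.1 hι hφ
    have h1 := len_le_inj q hq
    have h2 := seg_left hN hIu hι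
    have h3 := seg_le h2
    have h4 : len A I = len A M := by
      by_contra hne
      have := f_mono hN (c := c) (show j - len A I ≤ i - 1 by omega)
      omega
    have hs := surj_of_inj_len q hq h4.le
    let e := LinearEquiv.ofBijective q ⟨hq, hs⟩
    exact inj_of_retract hI q e.symm.toLinearMap (fun x => e.symm_apply_apply x)

end Cyc

end Part6

end Nak

namespace Nak

section Part7

variable {A : Type} [Ring A]

lemma pd_iff (n : ℕ) : ∀ M : ModuleCat.{0} A, ArtinAlg.ProjDimLE A n M ↔ HasProjectiveDimensionLT M (n + 1) := by
  have hse : ∀ {M P : ModuleCat.{0} A} (f : P ⟶ M) (_ : Epi f),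
      (ShortComplex.mk (kernel.ι f) f (kernel.condition f)).ShortExact := by
    intro M P f hf
    exact { exact := ShortComplex.exact_kernel f }
  induction n with
  | zero =>
    intro M
    rw [zero_add, ← projective_iff_hasProjectiveDimensionLT_one]
    constructor
    · rintro ⟨⟩; assumption
    · exact fun h => .zero M h
  | succ n ih =>
    intro M
    constructor
    · intro h
      cases h with
      | succ _ _ P f hP hf h =>
        rw [ih] at h
        exact ((hse f hf).hasProjectiveDimensionLT_X₃_iff n hP).2 h
    · intro h
      refine .succ n M (Projective.over M) (Projective.π M) inferInstance inferInstance ?_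
      rw [ih]
      exact ((hse (Projective.π M) inferInstance).hasProjectiveDimensionLT_X₃_iff n inferInstance).1 h

lemma pd_congr {M N : ModuleCat.{0} A} (e : M ≃ₗ[A] N) (n : ℕ) (h : ArtinAlg.ProjDimLE A n M) :
    ArtinAlg.ProjDimLE A n N := by
  rw [pd_iff] at h ⊢
  exact hasProjectiveDimensionLT_of_iso e.toModuleIso _

variable [IsArtinianRing A]

/-- combinatorial projective dimension -/
def D (f : ℤ → ℤ) : ℕ → ℤ → ℤ → Prop
  | 0, i, j => i = j ∨ j = f i
  | n + 1, i, j => i = j ∨ D f n j (f i)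

lemma proj_iff (M : ModuleCat.{0} A) : Projective M ↔ Module.Projective A M :=
  (IsProjective.iff_projective (R := A) M).symm

lemma inj_iff (M : ModuleCat.{0} A) : Injective M ↔ Module.Injective A M :=
  (Module.injective_iff_injective_object A M).symm

lemma Cyc.pd_seg (hN : NakH A) (c : Cyc A) (n : ℕ) : ∀ (i j : ℤ) (M : ModuleCat.{0} A), c.Seg i j M →
    (ArtinAlg.ProjDimLE A n M ↔ D c.f n i j) := by
  have hzero : ∀ (i j : ℤ) (M : ModuleCat.{0} A), c.Seg i j M → i = j → Projective M := by
    intro i j M h hij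
    have := h.1
    have h1 : len A M = 0 := by have := h.2.2.1; omega
    rw [len_eq_zero] at h1
    rw [proj_iff]
    exact Module.Projective.of_split (0 : M →ₗ[A] A) (0 : A →ₗ[A] M)
      (LinearMap.ext fun x => Subsingleton.elim _ _)
  induction n with
  | zero =>
    intro i j M h
    rw [pd_iff, zero_add, ← projective_iff_hasProjectiveDimensionLT_one]
    show _ ↔ i = j ∨ j = c.f i
    rcases (seg_le' h).eq_or_lt with hij | hij
    · exact ⟨fun _ => Or.inl hij, fun _ => hzero i j M h hij⟩
    · rw [proj_iff, seg_proj hN hij h]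
      have : i ≠ j := by omega
      tauto
  | succ n ih =>
    intro i j M h
    show _ ↔ i = j ∨ D c.f n j (c.f i)
    rcases (seg_le' h).eq_or_lt with hij | hij
    · refine ⟨fun _ => Or.inl hij, fun _ => ?_⟩
      have := hzero i j M h hij
      rw [pd_iff]
      exact hasProjectiveDimensionLT_of_ge M 1 _ (by omega)
    · have hfin := h.1
      obtain ⟨g, hg⟩ := h.2.2.2 hij
      obtain ⟨g', hg'⟩ := c.top i
      obtain ⟨q, hq, -⟩ := proj_lift h.2.1 hg' hg
      have hl := len_ker_range q
      rw [LinearMap.range_eq_top.2 hq, len_top] at hl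
      have h2 := h.2.2.1
      have hs : c.Seg j (c.f i) (LinearMap.ker q) := seg_sub hN (seg_P i) (by unfold Cyc.f; omega)
      rw [← ih j (c.f i) (ModuleCat.of A (LinearMap.ker q)) hs, pd_iff, pd_iff]
      have hse : (ShortComplex.mk (ModuleCat.ofHom (LinearMap.ker q).subtype)
          (ModuleCat.ofHom (X := c.P i) (Y := M) q) (by ext x; exact x.2)).ShortExact := by
        refine { exact := ?_, mono_f := ?_, epi_g := ?_ }
        · rw [ShortComplex.moduleCat_exact_iff]
          intro x hx
          exact ⟨⟨x, hx⟩, rfl⟩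
        · exact (ModuleCat.mono_iff_injective _).2 (LinearMap.ker q).injective_subtype
        · exact (ModuleCat.epi_iff_surjective _).2 hq
      have hP : Projective (c.P i) := (proj_iff _).2 (c.proj i)
      have h3 := hse.hasProjectiveDimensionLT_X₃_iff n hP
      have : i ≠ j := by omega
      constructor
      · intro h; exact Or.inr (h3.1 h)
      · rintro (h | h)
        · exact absurd h this
        · exact h3.2 h

lemma injenv (hN : NakH A) {X I : ModuleCat.{0} A} (hX : IsSimpleModule A X)
    (h : ArtinAlg.IsInjEnvOf A X I) : Module.Finite A I ∧ Uni A I ∧ Module.Injective A I ∧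
      ∃ f : X →ₗ[A] I, f ≠ 0 := by
  obtain ⟨f, hI, hm, hess⟩ := h
  rw [ModuleCat.mono_iff_injective] at hm
  have hf : f.hom ≠ 0 := by
    have := comp_ne_inj (id_ne (A := A) (U := X)) (g := f.hom) hm
    exact this
  have he : Ess f.hom := by
    intro K hK
    by_contra hle
    apply hK
    have hcomap : K.comap f.hom = ⊥ := by
      rcases eq_bot_or_eq_top (K.comap f.hom) with h | h
      · exact h
      · exfalso
        apply hle
        rintro _ ⟨x, rfl⟩
        have : x ∈ K.comap f.hom := by rw [h]; trivial
        exact this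
    have h1 : Mono (f ≫ ModuleCat.ofHom K.mkQ) := by
      rw [ModuleCat.mono_iff_injective]
      show Function.Injective (K.mkQ ∘ₗ f.hom)
      rw [← LinearMap.ker_eq_bot, LinearMap.ker_comp, Submodule.ker_mkQ, hcomap]
    have h2 := hess _ _ h1
    rw [ModuleCat.mono_iff_injective] at h2
    have h3 : Function.Injective K.mkQ := h2
    rw [← LinearMap.ker_eq_bot, Submodule.ker_mkQ] at h3
    exact h3
  obtain ⟨h1, h2⟩ := ess_fin hN hf he
  exact ⟨h1, h2, (inj_iff I).1 hI, f.hom, hf⟩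

namespace Cyc

variable (c : Cyc A)

lemma seg_injenv (hN : NakH A) {i : ℤ} {X I : ModuleCat.{0} A} (hX : IsSimpleModule A X)
    (e : X ≃ₗ[A] c.s i) (h : ArtinAlg.IsInjEnvOf A X I) :
    ∃ j, c.Seg j (i + 1) I ∧ c.f (j - 1) ≤ i ∧ i < c.f j ∧ j ≤ i := by
  obtain ⟨h1, h2, h3, f, hf⟩ := injenv hN hX h
  have hφ : ∃ φ : c.s (i + 1 - 1) →ₗ[A] I, φ ≠ 0 := by
    rw [show i + 1 - 1 = i by omega]
    exact ⟨f ∘ₗ e.symm.toLinearMap, comp_ne_surj e.symm.surjective hf⟩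
  obtain ⟨φ, hφ⟩ := hφ
  have hs := seg_left hN h2 hφ
  have hl := len_le_inj f (inj_of_ne hf)
  rw [len_simple] at hl
  refine ⟨_, hs, ?_, ?_, by omega⟩
  · have := (seg_inj hN (by omega) hs).1 h3
    omega
  · have := seg_le hs
    omega

lemma psi_to (hN : NakH A) {i : ℤ} {X U : ModuleCat.{0} A} (hX : IsSimpleModule A X)
    (e : U ≃ₗ[A] c.s i) (h : ArtinAlg.IsPsiOf A X U) :
    ∃ x, Nonempty (X ≃ₗ[A] c.s x) ∧ c.f i ≤ x ∧ x < c.f (i + 1) := by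
  obtain ⟨I, hI, T, ⟨hT, p, hp, -⟩, htau⟩ := h
  have hU : IsSimpleModule A U := IsSimpleModule.congr e
  have ha := arr_of_tau T U hT hU htau
  obtain ⟨eT⟩ := (ha.congr e (LinearEquiv.refl A T)).right_unique hN (c.arr i)
  obtain ⟨h1, h2, h3, f, hf⟩ := injenv hN hX hI
  rw [ModuleCat.epi_iff_surjective] at hp
  have hpne : p.hom ≠ 0 := by
    have := comp_ne_surj (f := p.hom) hp (id_ne (A := A) (U := T))
    exact this
  have hs : c.Seg (i + 1) (i + 1 + len A I) I :=
    ⟨h1, h2, by omega, fun _ => ⟨eT.toLinearMap ∘ₗ p.hom, comp_ne_inj hpne eT.injective⟩⟩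
  have hl := len_le_inj f (inj_of_ne hf)
  rw [len_simple] at hl
  obtain ⟨φ, hφ⟩ := seg_soc hN hs (by omega)
  refine ⟨_, h2.soc_unique hf hφ, ?_, ?_⟩
  · have := (seg_inj hN (by omega) hs).1 h3
    rw [show i + 1 - 1 = i by omega] at this
    omega
  · have := seg_le hs
    omega

lemma psi_from (hN : NakH A) {i x : ℤ} (h1 : c.f i ≤ x) (h2 : x < c.f (i + 1)) :
    ArtinAlg.IsPsiOf A (c.s x) (c.s i) := by
  have hi := c.lt_f i
  obtain ⟨M, hM⟩ := c.seg_exists (i := i + 1) (j := x + 1) (by omega) (by omega)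
  have hfin := hM.1
  have hinj : Module.Injective A M := (seg_inj hN (by omega) hM).2 (by
    rw [show i + 1 - 1 = i by omega]; omega)
  have hφ := seg_soc hN hM (by omega)
  rw [show x + 1 - 1 = x by omega] at hφ
  obtain ⟨φ, hφ⟩ := hφ
  obtain ⟨g, hg⟩ := hM.2.2.2 (by omega)
  refine ⟨M, ⟨ModuleCat.ofHom φ, (inj_iff M).2 hinj, (ModuleCat.mono_iff_injective _).2 (inj_of_ne hφ), ?_⟩,
    c.s (i + 1), ⟨c.simple _, ModuleCat.ofHom g, (ModuleCat.epi_iff_surjective _).2 (surj_of_ne hg), ?_⟩,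
    tau_of_arr hN _ _ (c.simple _) (c.simple _) (c.arr i)⟩
  · intro N k hk
    rw [ModuleCat.mono_iff_injective] at hk ⊢
    refine hM.2.1.inj_of_comp (g := φ) ?_
    exact comp_ne_inj (id_ne (A := A) (U := c.s x)) hk
  · intro N k hk
    rw [ModuleCat.epi_iff_surjective] at hk ⊢
    refine hM.2.1.surj_of_comp hg ?_
    exact comp_ne_surj (f := g ∘ₗ k.hom) hk (id_ne (A := A) (U := c.s (i + 1)))

end Cyc

lemma exists_step (f : ℤ → ℤ) {a b x : ℤ} (h1 : f a ≤ x) (h2 : x < f b) (hab : a ≤ b) :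
    ∃ y, a ≤ y ∧ y < b ∧ f y ≤ x ∧ x < f (y + 1) := by
  obtain ⟨d, rfl⟩ := Int.le.dest hab
  induction d with
  | zero => simp at h2; omega
  | succ d ih =>
    by_cases h : x < f (a + d)
    · obtain ⟨y, h3, h4, h5⟩ := ih h (by omega)
      exact ⟨y, h3, by push_cast; omega, h5⟩
    · refine ⟨a + d, by omega, by push_cast; omega, by omega, ?_⟩
      push_cast at h2
      rwa [add_assoc]

namespace Cyc

variable (c : Cyc A)

lemma path_from (hN : NakH A) (i : ℤ) (m : ℕ) : ∀ x, c.f^[m] i ≤ x → x < c.f^[m] (i + 1) →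
    ∃ d : ℕ → ModuleCat.{0} A, d 0 = c.s x ∧ (∀ k ≤ m, IsSimpleModule A (d k)) ∧
      (∀ k < m, ArtinAlg.IsPsiOf A (d k) (d (k + 1))) ∧ d m = c.s i := by
  induction m with
  | zero =>
    intro x h1 h2
    simp only [Function.iterate_zero, id] at h1 h2
    obtain rfl : x = i := by omega
    exact ⟨fun _ => c.s x, rfl, fun _ _ => c.simple x, fun k hk => absurd hk (by omega), rfl⟩
  | succ m ih =>
    intro x h1 h2
    rw [Function.iterate_succ_apply'] at h1 h2
    have hm : c.f^[m] i ≤ c.f^[m] (i + 1) := (f_mono hN).iterate m (by omega)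
    obtain ⟨y, h3, h4, h5, h6⟩ := exists_step c.f h1 h2 hm
    obtain ⟨d, hd0, hd1, hd2, hd3⟩ := ih y h3 h4
    refine ⟨fun k => Nat.casesOn k (c.s x) d, rfl, ?_, ?_, hd3⟩
    · intro k hk
      cases k with
      | zero => exact c.simple x
      | succ k => exact hd1 k (by omega)
    · intro k hk
      cases k with
      | zero =>
        show ArtinAlg.IsPsiOf A (c.s x) (d 0)
        rw [hd0]
        exact c.psi_from hN h5 h6
      | succ k => exact hd2 k (by omega)

lemma path_iff (hN : NakH A) {Y : ModuleCat.{0} A} {i : ℤ} (e : Y ≃ₗ[A] c.s i) (m : ℕ) :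
    ArtinAlg.PsiPathTo A (m + 1) Y ↔ c.f^[m] i < c.f^[m] (i + 1) := by
  constructor
  · rintro ⟨-, d, hd1, hd2, ⟨e'⟩⟩
    rw [show m + 1 - 1 = m by omega] at e'
    have key : ∀ t ≤ m, ∃ x, Nonempty (d (m - t) ≃ₗ[A] c.s x) ∧ c.f^[t] i ≤ x ∧ x < c.f^[t] (i + 1) := by
      intro t
      induction t with
      | zero =>
        intro _
        refine ⟨i, ⟨e'.toLinearEquiv.trans e⟩, le_rfl, ?_⟩
        simp
      | succ t ih =>
        intro ht
        obtain ⟨x, ⟨ex⟩, h1, h2⟩ := ih (by omega)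
        have h3 := hd2 (m - (t + 1)) (by omega)
        rw [show m - (t + 1) + 1 = m - t by omega] at h3
        obtain ⟨x', hx', h4, h5⟩ := c.psi_to hN (hd1 _ (by omega)) ex h3
        refine ⟨x', hx', ?_, ?_⟩
        · rw [Function.iterate_succ_apply']
          exact (f_mono hN h1).trans h4
        · rw [Function.iterate_succ_apply']
          exact h5.trans_le (f_mono hN (by omega))
    obtain ⟨x, -, h1, h2⟩ := key m le_rfl
    omega
  · intro h
    obtain ⟨d, hd0, hd1, hd2, hd3⟩ := c.path_from hN i m _ le_rfl h
    refine ⟨by omega, d, fun k hk => hd1 k (by omega), fun k hk => hd2 k (by omega), ?_⟩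
    rw [show m + 1 - 1 = m by omega, hd3]
    exact ⟨e.symm.toModuleIso⟩

end Cyc

end Part7

end Nak

namespace Nak

section Part8

lemma D_iff (f : ℤ → ℤ) (n : ℕ) : ∀ i j : ℤ, D f n i j ↔
    (∃ l, 2 * l ≤ n + 1 ∧ f^[l] i = f^[l] j) ∨ (∃ l, 2 * l ≤ n ∧ f^[l] j = f^[l + 1] i) := by
  induction n with
  | zero =>
    intro i j
    show i = j ∨ j = f i ↔ _
    constructor
    · rintro (h | h)
      · exact Or.inl ⟨0, by omega, h⟩
      · exact Or.inr ⟨0, by omega, h⟩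
    · rintro (⟨l, hl, h⟩ | ⟨l, hl, h⟩)
      · obtain rfl : l = 0 := by omega
        exact Or.inl h
      · obtain rfl : l = 0 := by omega
        exact Or.inr h
  | succ n ih =>
    intro i j
    show i = j ∨ D f n j (f i) ↔ _
    rw [ih]
    constructor
    · rintro (h | ⟨l, hl, h⟩ | ⟨l, hl, h⟩)
      · exact Or.inl ⟨0, by omega, h⟩
      · exact Or.inr ⟨l, by omega, h⟩
      · exact Or.inl ⟨l + 1, by omega, h⟩
    · rintro (⟨l, hl, h⟩ | ⟨l, hl, h⟩)
      · rcases l with _ | l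
        · exact Or.inl h
        · exact Or.inr (Or.inr ⟨l, by omega, h⟩)
      · exact Or.inr (Or.inl ⟨l, by omega, h⟩)

lemma iter_up (f : ℤ → ℤ) {k m : ℕ} (hkm : k ≤ m) {u v : ℤ} (h : f^[k] u = f^[k] v) :
    f^[m] u = f^[m] v := by
  obtain ⟨d, rfl⟩ := Nat.exists_eq_add_of_le hkm
  rw [add_comm, Function.iterate_add_apply, Function.iterate_add_apply, h]

lemma iter_range (f : ℤ → ℤ) (L : ℕ∞) (a b : ℤ) (hab : a ≤ b) :
    (∀ x, a ≤ x → x < b → ∃ k : ℕ, (k : ℕ∞) ≤ L ∧ f^[k] x = f^[k] (x + 1)) →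
    ∃ k : ℕ, (k : ℕ∞) ≤ L ∧ f^[k] a = f^[k] b := by
  induction b, hab using Int.le_induction with
  | base => exact fun _ => ⟨0, by simp, rfl⟩
  | succ b hab ih =>
    intro h
    obtain ⟨k, hk, h1⟩ := ih fun x hx hx' => h x hx (by omega)
    obtain ⟨l, hl, h2⟩ := h b hab (by omega)
    refine ⟨max k l, ?_, (iter_up f (le_max_left k l) h1).trans (iter_up f (le_max_right k l) h2)⟩
    rcases max_choice k l with h | h <;> rw [h] <;> assumption

lemma stab (f : ℤ → ℤ) (n : ℕ) (hn : 0 < n) (hper : ∀ i, f (i + n) = f i + n) :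
    ∃ N : ℕ, ∀ z, ∃ t, f^[N] z = f^[N + 1] t := by
  classical
  have hp1 : ∀ (m : ℕ) i, f^[m] (i + n) = f^[m] i + n := by
    intro m
    induction m with
    | zero => intro i; rfl
    | succ m ih => intro i; rw [Function.iterate_succ_apply, hper, ih, Function.iterate_succ_apply]
  have hp2 : ∀ (m : ℕ) i (q : ℤ), f^[m] (i + n * q) = f^[m] i + n * q := by
    intro m i q
    induction q using Int.induction_on with
    | zero => simp
    | succ q ih =>
      have := hp1 m (i + n * q)
      rw [ih] at this
      rw [show i + n * ((q : ℤ) + 1) = i + n * q + n by ring, this]; ring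
    | pred q ih =>
      have := hp1 m (i + n * (-(q : ℤ) - 1))
      rw [show i + n * (-(q : ℤ) - 1) + n = i + n * (-(q : ℤ)) by ring, ih] at this
      linarith
  let F : ℕ → Finset ℤ := fun m => (Finset.Ico (0 : ℤ) n).filter fun x => ∃ y, f^[m] y = x
  have hF : ∀ m, F (m + 1) ⊆ F m := by
    intro m x hx
    rw [Finset.mem_filter] at hx ⊢
    obtain ⟨h1, y, hy⟩ := hx
    exact ⟨h1, f y, hy⟩
  obtain ⟨N, hN⟩ : ∃ N, ∀ m, (F N).card ≤ (F m).card := by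
    have hw := Function.argmin_le (fun m => (F m).card)
    exact ⟨_, fun m => hw m⟩
  have hFN : F (N + 1) = F N := Finset.eq_of_subset_of_card_le (hF N) (hN _)
  refine ⟨N, fun z => ?_⟩
  have hmem : f^[N] z % n ∈ F N := by
    rw [Finset.mem_filter, Finset.mem_Ico]
    refine ⟨⟨Int.emod_nonneg _ (by omega), Int.emod_lt_of_pos _ (by omega)⟩, z + n * (-(f^[N] z / n)), ?_⟩
    rw [hp2, Int.emod_def]; ring
  rw [← hFN, Finset.mem_filter] at hmem
  obtain ⟨-, t, ht⟩ := hmem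
  refine ⟨t + n * (f^[N] z / n), ?_⟩
  rw [hp2, ht]
  exact (Int.emod_add_mul_ediv _ _).symm

lemma not_cyc (f : ℤ → ℤ) (hf : Monotone f) (n : ℕ) (hn : 0 < n) (hper : ∀ i, f (i + n) = f i + n)
    {i j z : ℤ} (h1 : f (j - 1) ≤ i) (hi : ∀ m, f^[m] i < f^[m] (i + 1))
    (hz1 : i + 1 ≤ z) (hz2 : z < f j) : ∃ m, f^[m] z = f^[m] (z + 1) := by
  by_contra hc
  push Not at hc
  obtain ⟨N, hN⟩ := stab f n hn hper
  have hm : ∀ m : ℕ, Monotone f^[m] := fun m => hf.iterate m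
  obtain ⟨t, ht⟩ := hN z
  have a1 : f^[N + 1] (j - 1) < f^[N + 1] t := by
    rw [← ht]
    exact ((hm N h1).trans_lt (hi N)).trans_le (hm N hz1)
  have a2 : f^[N + 1] t < f^[N + 1] j := by
    rw [← ht]
    exact (lt_of_le_of_ne (hm N (by omega)) (hc N)).trans_le (hm N (by omega : z + 1 ≤ f j))
  have b1 := (hm (N + 1)).reflect_lt a1
  have b2 := (hm (N + 1)).reflect_lt a2
  omega

variable {A : Type} [Ring A] [IsArtinianRing A]

namespace Cyc

variable {c : Cyc A}

lemma aVal_fin (hN : NakH A) {Y : ModuleCat.{0} A} {i : ℤ} (e : Y ≃ₗ[A] c.s i) (k : ℕ)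
    (h1 : c.f^[k] i = c.f^[k] (i + 1)) (h2 : ∀ m < k, c.f^[m] i ≠ c.f^[m] (i + 1)) :
    ArtinAlg.aVal A Y = k := by
  apply le_antisymm
  · apply sSup_le
    rintro d ⟨m, rfl, hm⟩
    obtain ⟨m, rfl⟩ : ∃ m', m = m' + 1 := ⟨m - 1, by have := hm.1; omega⟩
    rw [path_iff c hN e] at hm
    by_contra hc
    have hk : k ≤ m := by
      rw [not_le] at hc
      have := Nat.cast_lt.1 hc
      omega
    exact hm.ne (iter_up _ hk h1)
  · have hk : k ≠ 0 := by
      rintro rfl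
      simp at h1
    obtain ⟨k, rfl⟩ := Nat.exists_eq_succ_of_ne_zero hk
    apply le_sSup
    refine ⟨k + 1, rfl, ?_⟩
    rw [path_iff c hN e]
    exact lt_of_le_of_ne ((f_mono hN).iterate k (by omega)) (h2 k (by omega))

lemma aVal_top (hN : NakH A) {Y : ModuleCat.{0} A} {i : ℤ} (e : Y ≃ₗ[A] c.s i)
    (h : ∀ m, c.f^[m] i ≠ c.f^[m] (i + 1)) : ArtinAlg.aVal A Y = ⊤ := by
  rw [ENat.eq_top_iff_forall_ge]
  intro m
  have : ((m + 1 : ℕ) : ℕ∞) ≤ ArtinAlg.aVal A Y := by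
    apply le_sSup
    refine ⟨m + 1, rfl, ?_⟩
    rw [path_iff c hN e]
    exact lt_of_le_of_ne ((f_mono hN).iterate m (by omega)) (h m)
  exact le_trans (by exact_mod_cast Nat.le_succ m) this

lemma pd_le (hN : NakH A) {i j : ℤ} {M : ModuleCat.{0} A} (h : c.Seg i j M) {n : ℕ}
    (hD : D c.f n i j) : ArtinAlg.projDim A M ≤ n :=
  sInf_le ⟨n, rfl, (pd_seg hN c n i j M h).2 hD⟩

lemma pd_eq (hN : NakH A) {i j : ℤ} {M : ModuleCat.{0} A} (h : c.Seg i j M) {n : ℕ}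
    (hD : D c.f n i j) (hD' : ∀ m < n, ¬ D c.f m i j) : ArtinAlg.projDim A M = n := by
  refine le_antisymm (pd_le hN h hD) (le_sInf ?_)
  rintro d ⟨m, rfl, hm⟩
  rw [pd_seg hN c m i j M h] at hm
  by_contra hc
  rw [not_le] at hc
  exact hD' m (Nat.cast_lt.1 hc) hm

lemma pd_ex {i j : ℤ} {M : ModuleCat.{0} A} (hN : NakH A) (h : c.Seg i j M) {n : ℕ}
    (hp : ArtinAlg.projDim A M = n) : D c.f n i j ∧ ∀ m < n, ¬ D c.f m i j := by
  have hne : ({d : ℕ∞ | ∃ n : ℕ, d = n ∧ ArtinAlg.ProjDimLE A n M}).Nonempty := by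
    by_contra hc
    rw [Set.not_nonempty_iff_eq_empty] at hc
    unfold ArtinAlg.projDim at hp
    rw [hc, sInf_empty] at hp
    exact ENat.top_ne_natCast _ hp
  obtain ⟨m, hm1, hm2⟩ := csInf_mem hne
  change ArtinAlg.projDim A M = m at hm1
  rw [hp] at hm1
  obtain rfl : n = m := Nat.cast_injective hm1
  refine ⟨(pd_seg hN c n i j M h).1 hm2, fun m hm hD => ?_⟩
  have := pd_le hN h hD
  rw [hp] at this
  have := Nat.cast_le.1 this
  omega

lemma main (hN : NakH A) (S : ModuleCat.{0} A) (hS : IsSimpleModule A S) (e : S ≃ₗ[A] c.s 0) :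
    (ArtinAlg.aVal A S ≠ ⊤ ↔ ∃ n : ℕ, ArtinAlg.projDim A S = n ∧ Odd n) ∧
    (ArtinAlg.aVal A S ≠ ⊤ → ArtinAlg.projDim A S = 2 * ArtinAlg.aVal A S - 1 ∧
      ArtinAlg.projDim A S < 2 * ArtinAlg.aVal A S) ∧
    (ArtinAlg.aVal A S = ⊤ → ∀ I : ModuleCat.{0} A, ArtinAlg.IsInjEnvOf A S I →
      (∃ n : ℕ, ArtinAlg.projDim A I = n ∧ Even n) ∧
        ArtinAlg.projDim A I ≤ 2 * ArtinAlg.aAlg A) := by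
  classical
  have hseg : c.Seg 0 (0 + 1) S := seg_congr (c.seg_s 0) e.symm
  by_cases hfin : ∃ k, c.f^[k] 0 = c.f^[k] (0 + 1)
  · obtain ⟨k, h1, h2⟩ : ∃ k, c.f^[k] 0 = c.f^[k] (0 + 1) ∧ ∀ m < k, c.f^[m] 0 ≠ c.f^[m] (0 + 1) :=
      ⟨Nat.find hfin, Nat.find_spec hfin, fun m hm => Nat.find_min hfin hm⟩
    have ha := aVal_fin hN e k h1 h2
    have hk : k ≠ 0 := by
      rintro rfl
      simp at h1
    have hpd : ArtinAlg.projDim A S = (2 * k - 1 : ℕ) := by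
      apply pd_eq hN hseg
      · rw [D_iff]
        exact Or.inl ⟨k, by omega, h1⟩
      · intro m hm
        rw [D_iff]
        rintro (⟨l, hl, h⟩ | ⟨l, hl, h⟩)
        · exact h2 l (by omega) h
        · have hlk : l ≤ k := by omega
          have h3 := iter_up c.f hlk (u := 0 + 1) (v := c.f 0) h
          rw [← h1, ← Function.iterate_succ_apply, Function.iterate_succ_apply'] at h3
          have := c.lt_f (c.f^[k] 0)
          omega
    have hsub : (2 * (k : ℕ∞) - 1) = ((2 * k - 1 : ℕ) : ℕ∞) := by push_cast; rfl
    have hat : ArtinAlg.aVal A S ≠ ⊤ := by rw [ha]; exact ENat.natCast_ne_top k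
    refine ⟨⟨fun _ => ⟨_, hpd, k - 1, by omega⟩, fun _ => hat⟩, fun _ => ?_, fun h => absurd h hat⟩
    rw [hpd, ha]
    refine ⟨hsub.symm, ?_⟩
    have : ((2 * k - 1 : ℕ) : ℕ∞) < ((2 * k : ℕ) : ℕ∞) := Nat.cast_lt.2 (by omega)
    simpa using this
  · push Not at hfin
    have ha := aVal_top hN e hfin
    have hlt : ∀ m, c.f^[m] 0 < c.f^[m] (0 + 1) := fun m =>
      lt_of_le_of_ne ((f_mono hN).iterate m (by omega)) (hfin m)
    refine ⟨⟨fun h => absurd ha h, ?_⟩, fun h => absurd ha h, ?_⟩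
    · rintro ⟨n, hn, hodd⟩
      exfalso
      obtain ⟨hD, hD'⟩ := pd_ex hN hseg hn
      rw [D_iff] at hD
      rcases hD with ⟨l, hl, h⟩ | ⟨l, hl, h⟩
      · exact hfin l h
      · obtain ⟨q, rfl⟩ := hodd
        refine hD' (2 * q) (by omega) ?_
        rw [D_iff]
        exact Or.inr ⟨l, by omega, h⟩
    · intro _ I hI
      obtain ⟨j, hIs, hj1, hj2, hj3⟩ := seg_injenv c hN hS e hI
      obtain ⟨k, hk1, hk2⟩ : ∃ k : ℕ, (k : ℕ∞) ≤ ArtinAlg.aAlg A ∧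
          c.f^[k] (0 + 1) = c.f^[k] (c.f j) := by
        apply iter_range
        · omega
        · intro x hx1 hx2
          have hex := not_cyc c.f (f_mono hN) c.n c.hn c.f_per hj1 hlt hx1 hx2
          have hav := aVal_fin hN (LinearEquiv.refl A (c.s x)) (Nat.find hex) (Nat.find_spec hex)
            (fun m hm => Nat.find_min hex hm)
          refine ⟨Nat.find hex, ?_, Nat.find_spec hex⟩
          apply le_sSup
          refine ⟨c.s x, c.simple x, ?_, hav⟩
          rw [hav]
          exact ENat.natCast_ne_top _
      have hD : D c.f (2 * k) j (0 + 1) := by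
        rw [D_iff]
        exact Or.inr ⟨k, le_rfl, hk2⟩
      have hle := pd_le hN hIs hD
      constructor
      · obtain ⟨n, hn⟩ := ENat.ne_top_iff_exists.1 (ne_top_of_le_ne_top (ENat.natCast_ne_top _) hle)
        refine ⟨n, hn.symm, ?_⟩
        by_contra hodd
        rw [Nat.not_even_iff_odd] at hodd
        obtain ⟨hD1, hD2⟩ := pd_ex hN hIs hn.symm
        rw [D_iff] at hD1
        rcases hD1 with ⟨l, hl, h⟩ | ⟨l, hl, h⟩
        · have := (f_mono (c := c) hN).iterate l hj3
          have := hlt l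
          omega
        · obtain ⟨q, rfl⟩ := hodd
          refine hD2 (2 * q) (by omega) ?_
          rw [D_iff]
          exact Or.inr ⟨l, by omega, h⟩
      · refine hle.trans ?_
        push_cast
        gcongr

end Cyc

end Part8

end Nak

open ArtinAlg in
/-- Let `A` be a cyclic Nakayama algebra and `S` a simple module. Then
`a(S)` is finite iff `pd S` is odd, and in that case `pd S = 2 a(S) - 1` (in particular
`pd S < 2 a(S)`). If `a(S)` is infinite, then `pd (I S)` is even and
`pd (I S) ≤ 2 a(A)`. -/
theorem statement_8 (R : Type) [CommRing R] [IsArtinianRing R]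
    (A : Type) [Ring A] [Algebra R A] [Module.Finite R A]
    (hCyc : IsCyclicNakayama A)
    (S : ModuleCat.{0} A) (hS : IsSimpleModule A ↥S) :
    (aVal A S ≠ ⊤ ↔ ∃ n : ℕ, projDim A S = n ∧ Odd n) ∧
    (aVal A S ≠ ⊤ → projDim A S = 2 * aVal A S - 1 ∧ projDim A S < 2 * aVal A S) ∧
    (aVal A S = ⊤ → ∀ I : ModuleCat.{0} A, IsInjEnvOf A S I →
      (∃ n : ℕ, projDim A I = n ∧ Even n) ∧ projDim A I ≤ 2 * aAlg A) := by
  have hA : IsArtinianRing A := IsArtinianRing.of_finite R A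
  have hN : Nak.NakH A := Nak.nakH_of hCyc.1
  obtain ⟨c, ⟨e⟩⟩ := Nak.exists_cyc hN
    (fun U hU hP => hCyc.2.2 ⟨U, hU, (Nak.proj_iff U).2 hP⟩) S hS
  exact Nak.Cyc.main hN S hS e
end
end
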